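/- arXiv:0808.0133 — 2 statements merged into one kernel-verified Lean document; each statement's English description precedes it below -/
import Mathlib

section
/- If (A,B) ∈ H_id, then (A,B) is group-hyperbolic: there exist constants C > 0 and τ > 0 such that for every nontrivial element g of the free group on two generators a, b, the matrix obtained from the reduced word of g by substituting A for a, B for b, A⁻¹ for a⁻¹ and B⁻¹ for b⁻¹ has operator norm at least C·exp(τ·|g|), where |g| denotes the reduced word length of g. -/
/-! Write `A = R₀R₁` and `B = R₁R₂`, where `R₁ = (AB - BA) / √(-det (AB - BA))` is a trace-free
matrix of determinant `-1`, that is, a reflection of the hyperbolic plane, and so are `R₀ = AR₁` and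
`R₂ = R₁B`. Then `tr R₀R₁ = tr A`, `tr R₁R₂ = tr B`, `tr R₀R₂ = tr AB`, so the hypothesis says that
the three mirrors are pairwise ultraparallel, and the sign of the product of the traces says that
none of them separates the other two: after sign changes all three trace products are below `-2`
(`exists_reflections`).

A trace-free matrix `X` is identified with the quadratic form `qf X v = det (v, X v)`; the form is
definite exactly when `X` is timelike for the Lorentzian form `tr (X Y)`. This gives `lam > 1` with
`qf Rᵢ + lam * qf Rⱼ ≤ 0` for `i ≠ j` (`exists_lam`). Reflecting the half-planes of `R₀` and `R₂`
in `R₁` yields a ping-pong configuration of four cones `{F s > 0}`, one for each letter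
`s ∈ {a, a⁻¹, b, b⁻¹}`, with `F s ∘ s = -F s⁻¹` and `F p + lam * F q ≤ 0` for `p ≠ q`
(`letterForm_letterMat`, `letterForm_pair`). Hence `F s (s v) ≥ lam * F t v` whenever `st` is
reduced, so along a reduced word of length `n` the form grows by the factor `lam ^ n` (`growth`).
As the form is bounded by a multiple of `‖v‖²`, the operator norm grows at least like
`lam ^ (n / 2)`. -/

open Matrix

noncomputable section

/-- `SL(2,ℝ)`. -/
abbrev SL2 := Matrix.SpecialLinearGroup (Fin 2) ℝ

/-- Operator norm of a `2 × 2` real matrix, induced by the Euclidean norm on `ℝ²`. -/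
noncomputable def opNorm (A : Matrix (Fin 2) (Fin 2) ℝ) : ℝ :=
  ‖Matrix.toEuclideanCLM (𝕜 := ℝ) A‖

/-- Trace of an element of `SL(2,ℝ)`. -/
def trace2 (A : SL2) : ℝ := Matrix.trace (A : Matrix (Fin 2) (Fin 2) ℝ)

/-- Topology on `SL(2,ℝ)` induced from the space of `2 × 2` real matrices. -/
instance : TopologicalSpace SL2 := instTopologicalSpaceSubtype

/-- The real projective line: quotient of `ℝ² ∖ {0}` by nonzero scalar multiplication. -/
abbrev P1 := Projectivization ℝ (Fin 2 → ℝ)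

/-- The quotient topology on the real projective line. -/
instance : TopologicalSpace P1 := instTopologicalSpaceQuotient

/-- The projective action of `SL(2,ℝ)` on the real projective line. -/
def projAct (A : SL2) : P1 → P1 :=
  Projectivization.map (Matrix.SpecialLinearGroup.toLin' A).toLinearMap
    (Matrix.SpecialLinearGroup.toLin' A).injective

/-- For a word `w = [i₁, …, iₙ]`, the product `A_{iₙ} ⋯ A_{i₁}`. -/
def wordProd {N : ℕ} (A : Fin N → SL2) (w : List (Fin N)) : SL2 :=
  (w.reverse.map A).prod

/-- Uniform hyperbolicity with respect to the full shift on `N` symbols: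
every product of `n` matrices has operator norm at least `C·λⁿ`. -/
def UnifHyp {N : ℕ} (A : Fin N → SL2) : Prop :=
  ∃ C > (0:ℝ), ∃ lam > (1:ℝ), ∀ w : List (Fin N), w ≠ [] →
    opNorm (wordProd A w : Matrix (Fin 2) (Fin 2) ℝ) ≥ C * lam ^ w.length

/-- Transitivity of the subshift of finite type given by the transition relation `T`:
any symbol can be joined to any other by an admissible word. -/
def TransitiveSubshift {N : ℕ} (T : Fin N → Fin N → Prop) : Prop :=
  ∀ α β : Fin N, ∃ w : List (Fin N), w ≠ [] ∧ w.Chain' T ∧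
    w.head? = some α ∧ w.getLast? = some β

/-- Uniform hyperbolicity with respect to the subshift determined by the
transition relation `T`. -/
def UnifHypSub {N : ℕ} (T : Fin N → Fin N → Prop) (A : Fin N → SL2) : Prop :=
  ∃ C > (0:ℝ), ∃ lam > (1:ℝ), ∀ w : List (Fin N), w ≠ [] → w.Chain' T →
    opNorm (wordProd A w : Matrix (Fin 2) (Fin 2) ℝ) ≥ C * lam ^ w.length

/-- For a word `w` in two letters (`true ↦ A`, `false ↦ B`), the corresponding
product of the matrices `A`, `B` (letters applied right-to-left). -/
def pairProd (A B : SL2) (w : List Bool) : SL2 :=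
  (w.reverse.map fun b => if b then A else B).prod

/-- Uniform hyperbolicity of a pair `(A,B)` with respect to the full shift on two symbols. -/
def UnifHypPair (A B : SL2) : Prop :=
  ∃ C > (0:ℝ), ∃ lam > (1:ℝ), ∀ w : List Bool, w ≠ [] →
    opNorm (pairProd A B w : Matrix (Fin 2) (Fin 2) ℝ) ≥ C * lam ^ w.length

/-- The hyperbolicity locus for the full shift on two symbols. -/
def UHpairs : Set (SL2 × SL2) := {p | UnifHypPair p.1 p.2}

/-- The set of pairs having an elliptic product. -/
def Epairs : Set (SL2 × SL2) :=
  {p | ∃ w : List Bool, w ≠ [] ∧ |trace2 (pairProd p.1 p.2 w)| < 2}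

/-- An open interval in the projective line: a nonempty open connected subset
whose complement contains more than one point. -/
def IsOpenInterval (I : Set P1) : Prop :=
  IsOpen I ∧ IsConnected I ∧ Iᶜ.Nontrivial

/-- `H₀`: pairs possessing a common strictly invariant open interval. -/
def H0 : Set (SL2 × SL2) :=
  {p | ∃ I : Set P1, IsOpenInterval I ∧
        projAct p.1 '' closure I ⊆ I ∧ projAct p.2 '' closure I ⊆ I}

/-- `H_id`: pairs with `|tr A| > 2`, `|tr B| > 2`, `|tr AB| > 2`, `tr A · tr B · tr AB < 0`. -/
def Hid : Set (SL2 × SL2) :=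
  {p | 2 < |trace2 p.1| ∧ 2 < |trace2 p.2| ∧ 2 < |trace2 (p.1 * p.2)| ∧
       trace2 p.1 * trace2 p.2 * trace2 (p.1 * p.2) < 0}

/-- `F₊(A,B) = (A, AB)`. -/
def Fplus (p : SL2 × SL2) : SL2 × SL2 := (p.1, p.1 * p.2)

/-- `F₋(A,B) = (BA, B)`. -/
def Fminus (p : SL2 × SL2) : SL2 × SL2 := (p.2 * p.1, p.2)

/-- `applySeq [ε₁, …, ε_k] = F_{ε_k} ∘ ⋯ ∘ F_{ε₁}`, where `true` stands for `+`
and `false` for `−`. -/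
def applySeq (s : List Bool) (p : SL2 × SL2) : SL2 × SL2 :=
  s.foldl (fun q e => if e then Fplus q else Fminus q) p

/-- A pair `(A,B)` is free if `|tr A| ≥ 2`, `|tr B| ≥ 2`, `|tr AB| ≥ 2` and
`tr A · tr B · tr AB < 0`. -/
def FreePair (p : SL2 × SL2) : Prop :=
  2 ≤ |trace2 p.1| ∧ 2 ≤ |trace2 p.2| ∧ 2 ≤ |trace2 (p.1 * p.2)| ∧
    trace2 p.1 * trace2 p.2 * trace2 (p.1 * p.2) < 0

/-- A pair is straight if it lies in the closure of `H₀`. -/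
def Straight (p : SL2 × SL2) : Prop := p ∈ closure H0

/-- A pair `(A,B)` is twisted if `|tr A| ≥ 2`, `|tr B| ≥ 2` and it is not straight. -/
def Twisted (p : SL2 × SL2) : Prop :=
  2 ≤ |trace2 p.1| ∧ 2 ≤ |trace2 p.2| ∧ ¬ Straight p

/-- A pair is almost hyperbolic if every image of it under the monoid generated by
`F₊`, `F₋` consists of two non-elliptic matrices. -/
def AlmostHyperbolic (p : SL2 × SL2) : Prop :=
  ∀ s : List Bool, 2 ≤ |trace2 (applySeq s p).1| ∧ 2 ≤ |trace2 (applySeq s p).2|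

/-- Group-hyperbolicity of a pair: exponential growth over all reduced words
in the free group on two generators (`true ↦ A`, `false ↦ B`). -/
def GroupHyp (A B : SL2) : Prop :=
  ∃ C > (0:ℝ), ∃ τ > (0:ℝ), ∀ g : FreeGroup Bool, g ≠ 1 →
    opNorm ((FreeGroup.lift (fun b => if b then A else B) g : SL2) :
        Matrix (Fin 2) (Fin 2) ℝ) ≥
      C * Real.exp (τ * (FreeGroup.toWord g).length)

/-- `M` has finitely many connected components, and distinct components have
disjoint closures. -/
def FinCompDisjClosures (M : Set P1) : Prop :=
  {C : Set P1 | ∃ x ∈ M, C = connectedComponentIn M x}.Finite ∧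
    ∀ x ∈ M, ∀ y ∈ M, connectedComponentIn M x ≠ connectedComponentIn M y →
      closure (connectedComponentIn M x) ∩ closure (connectedComponentIn M y) = ∅

end

/-! ### Quadratic forms of trace-free matrices -/

/-- The quadratic form `v ↦ det (v, X v)` on `ℝ²`. -/
def qf (X : Matrix (Fin 2) (Fin 2) ℝ) (v : Fin 2 → ℝ) : ℝ :=
  v 0 * (X *ᵥ v) 1 - v 1 * (X *ᵥ v) 0

lemma qf_neg_vec (X : Matrix (Fin 2) (Fin 2) ℝ) (v : Fin 2 → ℝ) : qf X (-v) = qf X v := by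
  simp only [qf, Matrix.mulVec_neg, Pi.neg_apply, neg_mul_neg]

lemma qf_self {Y : Matrix (Fin 2) (Fin 2) ℝ} (h : Y * Y = 1) (v : Fin 2 → ℝ) :
    qf Y (Y *ᵥ v) = -qf Y v := by
  simp only [qf, Matrix.mulVec_mulVec, h, Matrix.one_mulVec]
  ring

lemma qf_lin (X Y : Matrix (Fin 2) (Fin 2) ℝ) (l : ℝ) (v : Fin 2 → ℝ) :
    qf (X + l • Y) v = qf X v + l * qf Y v := by
  simp only [qf, Matrix.add_mulVec, Matrix.smul_mulVec, Pi.add_apply, Pi.smul_apply, smul_eq_mul]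
  ring

lemma qf_le (X : Matrix (Fin 2) (Fin 2) ℝ) : ∃ K > 0, ∀ v : Fin 2 → ℝ,
    qf X v ≤ K * (v 0 ^ 2 + v 1 ^ 2) := by
  refine ⟨|X 1 0| + |X 0 1| + |X 1 1 - X 0 0| + 1, by positivity, fun v => ?_⟩
  have e : qf X v = X 1 0 * v 0 ^ 2 + (X 1 1 - X 0 0) * (v 0 * v 1) - X 0 1 * v 1 ^ 2 := by
    simp only [qf, Matrix.mulVec, dotProduct, Fin.sum_univ_two]
    ring
  have h1 : X 1 0 * v 0 ^ 2 ≤ |X 1 0| * v 0 ^ 2 := by gcongr; exact le_abs_self _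
  have h2 : -X 0 1 * v 1 ^ 2 ≤ |X 0 1| * v 1 ^ 2 := by gcongr; exact neg_le_abs _
  have h3 : (X 1 1 - X 0 0) * (v 0 * v 1) ≤ |X 1 1 - X 0 0| * (v 0 ^ 2 + v 1 ^ 2) := by
    refine (le_abs_self _).trans ?_
    rw [abs_mul]
    gcongr
    rw [abs_le]
    constructor <;> nlinarith [sq_nonneg (v 0 - v 1), sq_nonneg (v 0 + v 1)]
  have h4 : 0 ≤ |X 1 0| * v 1 ^ 2 := by positivity
  have h5 : 0 ≤ |X 0 1| * v 0 ^ 2 := by positivity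
  rw [e]
  nlinarith [sq_nonneg (v 0), sq_nonneg (v 1)]

lemma norm_sq_mulVec_le (M : Matrix (Fin 2) (Fin 2) ℝ) (v : Fin 2 → ℝ) :
    (M *ᵥ v) 0 ^ 2 + (M *ᵥ v) 1 ^ 2 ≤ opNorm M ^ 2 * (v 0 ^ 2 + v 1 ^ 2) := by
  have h := (Matrix.toEuclideanCLM (𝕜 := ℝ) M).le_opNorm (WithLp.toLp 2 v)
  have h2 := pow_le_pow_left₀ (norm_nonneg _) h 2
  rw [mul_pow, EuclideanSpace.norm_sq_eq, EuclideanSpace.norm_sq_eq] at h2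
  simpa [Fin.sum_univ_two, opNorm] using h2

/-- In the Lorentzian space of trace-free matrices with the form `tr (U V)`, two timelike
vectors with negative product lie in the same half of the light cone, that is, the
corresponding quadratic forms are definite of the same sign. -/
lemma qf_nonpos {U V : Matrix (Fin 2) (Fin 2) ℝ} (hU : U.trace = 0) (hV : V.trace = 0)
    (hUU : (U * U).trace < 0) (hVV : (V * V).trace < 0) (hUV : (U * V).trace < 0)
    (hU10 : U 1 0 < 0) (v : Fin 2 → ℝ) : qf V v ≤ 0 := by
  simp only [Matrix.trace_fin_two, Matrix.mul_apply, Fin.sum_univ_two] at hU hV hUU hVV hUV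
  simp only [qf, Matrix.mulVec, dotProduct, Fin.sum_univ_two]
  generalize U 0 0 = a at *
  generalize U 0 1 = b at *
  generalize U 1 0 = c at *
  have hd' : U 1 1 = -a := by linarith
  rw [hd'] at hUU hUV
  generalize V 0 0 = a' at *
  generalize V 0 1 = b' at *
  generalize V 1 0 = c' at *
  have hd : V 1 1 = -a' := by linarith
  rw [hd] at hVV hUV ⊢
  generalize v 0 = x at *
  generalize v 1 = y at *
  have h1 : a ^ 2 + b * c < 0 := by nlinarith
  have h2 : a' ^ 2 + b' * c' < 0 := by nlinarith
  have hc : c' < 0 := by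
    by_contra! hc
    have hc0 : 0 < c' := by
      rcases hc.eq_or_lt with h | h
      · rw [← h] at h2; nlinarith [sq_nonneg a']
      · exact h
    -- multiply the product by `c * c'` and complete the square
    have h3 : 0 < (2 * a * a' + b * c' + c * b') * (c * c') := by
      apply mul_pos_of_neg_of_neg
      · linarith
      · exact mul_neg_of_neg_of_pos hU10 hc0
    nlinarith [sq_nonneg (a * c' - a' * c), mul_pos hc0 hc0, mul_pos (neg_pos.2 hU10) (neg_pos.2 hU10),
      mul_pos (mul_pos hc0 hc0) (neg_pos.2 h1),
      mul_pos (mul_pos (neg_pos.2 hU10) (neg_pos.2 hU10)) (neg_pos.2 h2)]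
  have h4 : 0 ≤ (x * (c' * x + -a' * y) - y * (a' * x + b' * y)) * c' := by
    nlinarith [sq_nonneg (c' * x - a' * y), sq_nonneg y, mul_nonneg (sq_nonneg y) (neg_pos.2 h2).le]
  by_contra! h5
  nlinarith [mul_pos h5 (neg_pos.2 hc)]

/-! ### Three reflections in ultraparallel mirrors -/

/-- Three trace-free involutions with pairwise trace products below `-2` are reflections in
three pairwise ultraparallel geodesics; the sign condition `hneg` selects the orientation for
which the half-planes where the forms are positive are disjoint. The constant works because
`tr ((X + lam Y) ^ 2) = 2 + 2 lam ^ 2 + 2 lam tr (X Y)`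
is negative for `lam = 1 + δ` as soon as `tr (X Y) ≤ -2 - δ`. -/
lemma exists_lam {Y : Fin 3 → Matrix (Fin 2) (Fin 2) ℝ} (h0 : ∀ i, (Y i).trace = 0)
    (hsq : ∀ i, Y i * Y i = 1) (ht : ∀ i j, i ≠ j → (Y i * Y j).trace < -2)
    (hneg : Y 0 1 0 + Y 1 1 0 < 0) :
    ∃ lam > (1 : ℝ), ∀ i j, i ≠ j → ∀ v, qf (Y i) v + lam * qf (Y j) v ≤ 0 := by
  have h2 : ∀ i, (Y i * Y i).trace = 2 := fun i => by rw [hsq]; simp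
  obtain ⟨δ, hδ, hδt⟩ : ∃ δ > (0 : ℝ), ∀ i j, i ≠ j → (Y i * Y j).trace ≤ -2 - δ := by
    refine ⟨min (-2 - (Y 0 * Y 1).trace) (min (-2 - (Y 0 * Y 2).trace) (-2 - (Y 1 * Y 2).trace)),
      ?_, ?_⟩
    · have := ht 0 1 (by decide)
      have := ht 0 2 (by decide)
      have := ht 1 2 (by decide)
      simp only [gt_iff_lt, lt_min_iff]
      refine ⟨?_, ?_, ?_⟩ <;> linarith
    · have e1 := min_le_left (-2 - (Y 0 * Y 1).trace)
        (min (-2 - (Y 0 * Y 2).trace) (-2 - (Y 1 * Y 2).trace))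
      have e2 := (min_le_right (-2 - (Y 0 * Y 1).trace)
        (min (-2 - (Y 0 * Y 2).trace) (-2 - (Y 1 * Y 2).trace))).trans (min_le_left _ _)
      have e3 := (min_le_right (-2 - (Y 0 * Y 1).trace)
        (min (-2 - (Y 0 * Y 2).trace) (-2 - (Y 1 * Y 2).trace))).trans (min_le_right _ _)
      have c1 := Matrix.trace_mul_comm (Y 1) (Y 0)
      have c2 := Matrix.trace_mul_comm (Y 2) (Y 0)
      have c3 := Matrix.trace_mul_comm (Y 2) (Y 1)
      intro i j hij
      fin_cases i <;> fin_cases j <;> first | exact absurd rfl hij | (simp; linarith)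
  refine ⟨1 + δ, by linarith, fun i j hij v => ?_⟩
  have hU : ∀ k, ((Y 0 + Y 1) * Y k).trace < 0 := by
    intro k
    rw [add_mul, Matrix.trace_add]
    have e1 := ht 0 1 (by decide)
    have e2 := ht 1 0 (by decide)
    have e3 := ht 0 2 (by decide)
    have e4 := ht 1 2 (by decide)
    have e5 := h2 0
    have e6 := h2 1
    fin_cases k <;> simp <;> linarith
  rw [← qf_lin]
  refine qf_nonpos (U := Y 0 + Y 1) (by simp [h0]) (by simp [h0]) ?_ ?_ ?_ hneg v
  · rw [mul_add, Matrix.trace_add]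
    linarith [hU 0, hU 1]
  · have hs := Matrix.trace_mul_comm (Y j) (Y i)
    simp only [add_mul, mul_add, Matrix.trace_add, Matrix.smul_mul, Matrix.mul_smul,
      Matrix.trace_smul, smul_eq_mul, h2, hs]
    nlinarith [hδt i j hij]
  · rw [mul_add, Matrix.trace_add, Matrix.mul_smul, Matrix.trace_smul, smul_eq_mul]
    nlinarith [hU i, hU j]

lemma exists_qf_pos {Y : Matrix (Fin 2) (Fin 2) ℝ} (h0 : Y.trace = 0) (hsq : Y * Y = 1) :
    ∃ v, 0 < qf Y v := by
  by_contra! h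
  have hz : ∀ v, qf Y v = 0 := fun v => by
    have := h (Y *ᵥ v)
    rw [qf_self hsq] at this
    linarith [h v]
  have e1 := hz ![1, 0]
  have e2 := hz ![0, 1]
  have e3 := hz ![1, 1]
  have e4 := congrFun (congrFun hsq 0) 0
  simp [qf, Matrix.mulVec, dotProduct, Fin.sum_univ_two, Matrix.mul_apply,
    Matrix.trace_fin_two] at e1 e2 e3 e4 h0
  have : Y 0 0 = 0 := by rw [e1, e2] at e3; linarith
  rw [this, e1] at e4
  norm_num at e4

/-! ### The four ping-pong cones and growth along reduced words -/

/-- The quadratic form attached to a letter `s`, positive on the ping-pong cone of `s`. A letter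
is encoded as in `FreeGroup`: `(true, true)` is `a`, `(false, false)` is `b⁻¹`. With `Y 0, Y 1, Y 2` the three reflections,
`A = ± Y 0 * Y 1` and `B = ± Y 1 * Y 2`, the cones of `A, A⁻¹, B, B⁻¹` correspond to the
half-planes of `Y 0`, its mirror image under `Y 1`, the mirror image of that of `Y 2` under
`Y 1`, and that of `Y 2`. -/
def letterForm (Y : Fin 3 → Matrix (Fin 2) (Fin 2) ℝ) (s : Bool × Bool) (v : Fin 2 → ℝ) : ℝ :=
  qf (Y (if s.1 then 0 else 2)) (if s.1 = s.2 then v else Y 1 *ᵥ v)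

/-- The four cones have disjoint closures, uniformly. Cones on opposite sides of `Y 1` are
compared through the form of `Y 1`, which changes sign under `Y 1`. -/
lemma letterForm_pair {Y : Fin 3 → Matrix (Fin 2) (Fin 2) ℝ} (hsq : ∀ i, Y i * Y i = 1)
    {lam : ℝ} (hl : 1 < lam)
    (h : ∀ i j, i ≠ j → ∀ v, qf (Y i) v + lam * qf (Y j) v ≤ 0) {p q : Bool × Bool}
    (hpq : p ≠ q) (v : Fin 2 → ℝ) : letterForm Y p v + lam * letterForm Y q v ≤ 0 := by
  have cross : ∀ i j, i ≠ 1 → j ≠ 1 → ∀ v, qf (Y i) v + lam * qf (Y j) (Y 1 *ᵥ v) ≤ 0 := by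
    intro i j hi hj v
    have a1 := h i 1 hi v
    have a2 := h 1 i hi.symm v
    have a3 := h j 1 hj (Y 1 *ᵥ v)
    have a4 := h 1 j hj.symm (Y 1 *ᵥ v)
    rw [qf_self (hsq 1)] at a3 a4
    rcases le_total 0 (qf (Y 1) v) with hβ | hβ <;> nlinarith
  have cross' : ∀ i j, i ≠ 1 → j ≠ 1 → ∀ v, qf (Y i) (Y 1 *ᵥ v) + lam * qf (Y j) v ≤ 0 := by
    intro i j hi hj v
    simpa only [Matrix.mulVec_mulVec, hsq, Matrix.one_mulVec] using cross i j hi hj (Y 1 *ᵥ v)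
  obtain ⟨_ | _, _ | _⟩ := p <;> obtain ⟨_ | _, _ | _⟩ := q <;>
    simp only [letterForm, reduceIte, reduceCtorEq] <;>
    first
    | exact absurd rfl hpq
    | (apply h; decide)
    | (apply cross <;> decide)
    | (apply cross' <;> decide)

/-- Growth along reduced words: prepending a letter `s` to a word beginning with `t ≠ s⁻¹` gives
`F s (M s v) = -F s⁻¹ v ≥ lam * F t v`. -/
lemma growth {F : Bool × Bool → (Fin 2 → ℝ) → ℝ} {M : Bool × Bool → SL2} {lam c : ℝ}
    (hl : 1 < lam)
    (h1 : ∀ s v, F s ((M s : Matrix (Fin 2) (Fin 2) ℝ) *ᵥ v) = -F (s.1, !s.2) v)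
    (h2 : ∀ p q, p ≠ q → ∀ v, F p v + lam * F q v ≤ 0)
    {v : Bool × Bool → Fin 2 → ℝ} (hv : ∀ s, c ≤ F s (v s)) (L : List (Bool × Bool)) :
    ∀ s, FreeGroup.IsReduced (s :: L) →
      ∃ t, c * lam ^ (s :: L).length ≤
        F s ((((s :: L).map M).prod : SL2).1 *ᵥ v t) := by
  induction L with
  | nil =>
    intro s _
    refine ⟨s, ?_⟩
    have := h2 (s.1, !s.2) s (by intro h; simpa using congrArg Prod.snd h) (v s)
    have e := h1 s (v s)
    simp only [List.map_cons, List.map_nil, List.prod_cons, List.prod_nil, mul_one,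
      List.length_cons, List.length_nil, zero_add, pow_one]
    erw [e]
    nlinarith [hv s]
  | cons t L ih =>
    intro s hs
    rw [FreeGroup.isReduced_cons_cons] at hs
    obtain ⟨u, hu⟩ := ih t hs.2
    refine ⟨u, ?_⟩
    rw [List.map_cons, List.prod_cons]
    have e := h1 s (((t :: L).map M).prod.1 *ᵥ v u)
    rw [Matrix.mulVec_mulVec] at e
    have := h2 (s.1, !s.2) t (by
      rintro rfl
      simpa using hs.1 rfl) (((t :: L).map M).prod.1 *ᵥ v u)
    erw [e]
    rw [List.length_cons, pow_succ]
    nlinarith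

/-! ### The reflections of a pair in `H_id` -/

lemma mul_self_eq_one_of_trace_det {R : Matrix (Fin 2) (Fin 2) ℝ} (h0 : R.trace = 0)
    (hd : R.det = -1) : R * R = 1 := by
  rw [Matrix.trace_fin_two] at h0
  rw [Matrix.det_fin_two] at hd
  have h11 : R 1 1 = -R 0 0 := by linarith
  rw [h11] at hd
  ext i j
  fin_cases i <;> fin_cases j <;> simp [Matrix.mul_apply, Fin.sum_univ_two, h11] <;> linarith

/-- The Fricke identity for the determinant of `AB - BA`. -/
lemma det_commutator (A B : Matrix (Fin 2) (Fin 2) ℝ) (hA : A.det = 1) (hB : B.det = 1) :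
    (A * B - B * A).det = 4 + A.trace * B.trace * (A * B).trace
      - A.trace ^ 2 - B.trace ^ 2 - (A * B).trace ^ 2 := by
  have key : (A * B - B * A).det = 4 * A.det * B.det + A.trace * B.trace * (A * B).trace
      - A.trace ^ 2 * B.det - B.trace ^ 2 * A.det - (A * B).trace ^ 2 := by
    simp only [Matrix.det_fin_two, Matrix.trace_fin_two, Matrix.sub_apply, Matrix.mul_apply,
      Fin.sum_univ_two]
    ring
  rw [key, hA, hB]
  ring

lemma exists_sign {x : ℝ} (h : 2 < |x|) : ∃ s : ℝ, (s = 1 ∨ s = -1) ∧ s * x < -2 := by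
  rcases lt_abs.1 h with h | h
  · exact ⟨-1, Or.inr rfl, by linarith⟩
  · exact ⟨1, Or.inl rfl, by linarith⟩

/-- A pair in `H_id` generates, up to signs, a subgroup of a group generated by three
reflections; the middle one is proportional to `AB - BA`. The signs of the three matrices are
chosen so that all trace products are below `-2`, which is possible because
`tr A * tr B * tr AB < 0`. -/
lemma exists_reflections (A B : SL2) (h : (A, B) ∈ Hid) :
    ∃ Y : Fin 3 → Matrix (Fin 2) (Fin 2) ℝ, (∀ i, (Y i).trace = 0) ∧ (∀ i, Y i * Y i = 1) ∧
      (∀ i j, i ≠ j → (Y i * Y j).trace < -2) ∧ Y 0 1 0 + Y 1 1 0 < 0 ∧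
      (A.1 = Y 0 * Y 1 ∨ A.1 = -(Y 0 * Y 1)) ∧ (B.1 = Y 1 * Y 2 ∨ B.1 = -(Y 1 * Y 2)) := by
  obtain ⟨A, hA⟩ := A
  obtain ⟨B, hB⟩ := B
  obtain ⟨hx, hy, hz, hxyz⟩ := h
  change 2 < |A.trace| at hx
  change 2 < |B.trace| at hy
  change 2 < |(A * B).trace| at hz
  change A.trace * B.trace * (A * B).trace < 0 at hxyz
  set D := (A * B - B * A).det with hD
  have hD0 : D < 0 := by
    rw [hD, det_commutator A B hA hB]
    have : 2 ^ 2 < |A.trace| ^ 2 := pow_lt_pow_left₀ hx (by norm_num) (by norm_num)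
    rw [sq_abs] at this
    nlinarith [sq_nonneg B.trace, sq_nonneg (A * B).trace]
  set r := (√(-D))⁻¹ with hr
  have hr2 : r ^ 2 * D = -1 := by
    rw [hr, inv_pow, Real.sq_sqrt (by linarith)]
    field_simp [hD0.ne]
  set R := r • (A * B - B * A) with hR
  have htr : R.trace = 0 := by
    rw [hR, Matrix.trace_smul, Matrix.trace_sub, Matrix.trace_mul_comm A B, sub_self, smul_zero]
  have hdet : R.det = -1 := by
    rw [hR, Matrix.det_smul, Fintype.card_fin, ← hD, hr2]
  have hRR : R * R = 1 := mul_self_eq_one_of_trace_det htr hdet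
  have htA : (A * R).trace = 0 := by
    rw [hR, Matrix.mul_smul, Matrix.trace_smul, mul_sub, Matrix.trace_sub,
      ← mul_assoc A B A, Matrix.trace_mul_comm (A * B) A, sub_self, smul_zero]
  have htB : (R * B).trace = 0 := by
    rw [hR, Matrix.smul_mul, Matrix.trace_smul, sub_mul, Matrix.trace_sub,
      mul_assoc B A B, Matrix.trace_mul_comm B (A * B), sub_self, smul_zero]
  have hAA : (A * R) * (A * R) = 1 :=
    mul_self_eq_one_of_trace_det htA (by rw [Matrix.det_mul, hA, hdet]; norm_num)
  have hBB : (R * B) * (R * B) = 1 :=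
    mul_self_eq_one_of_trace_det htB (by rw [Matrix.det_mul, hB, hdet]; norm_num)
  have p01 : A * R * R = A := by rw [mul_assoc, hRR, mul_one]
  have p12 : R * (R * B) = B := by rw [← mul_assoc, hRR, one_mul]
  have p02 : A * R * (R * B) = A * B := by rw [mul_assoc, p12]
  obtain ⟨s, hs, hsx⟩ := exists_sign hx
  obtain ⟨t, ht, hty⟩ := exists_sign hy
  have hst : s * t * (A * B).trace < -2 := by
    have h1 : 2 < |s * t * (A * B).trace| := by
      rcases hs with rfl | rfl <;> rcases ht with rfl | rfl <;> simpa using hz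
    have h2 : (s * A.trace) * (t * B.trace) * (s * t * (A * B).trace) < 0 := by
      rcases hs with rfl | rfl <;> rcases ht with rfl | rfl <;> linarith
    have h3 : 0 < (s * A.trace) * (t * B.trace) := mul_pos_of_neg_of_neg (by linarith) (by linarith)
    rcases lt_abs.1 h1 with h | h
    · nlinarith
    · linarith
  -- a common sign `e` orients the three half-planes
  obtain ⟨e, he, hneg⟩ : ∃ e : ℝ, (e = 1 ∨ e = -1) ∧ e * (s * (A * R) 1 0 + R 1 0) < 0 := by
    rcases lt_trichotomy (s * (A * R) 1 0 + R 1 0) 0 with h | h | h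
    · exact ⟨1, Or.inl rfl, by linarith⟩
    · exfalso
      -- the sum of the first two reflections is timelike, so its lower left entry is nonzero
      have hss : s * s = 1 := by rcases hs with rfl | rfl <;> norm_num
      set P := s • (A * R) + R with hP
      have hP0 : P.trace = 0 := by rw [hP, Matrix.trace_add, Matrix.trace_smul, htA, htr]; simp
      have hPP : (P * P).trace < 0 := by
        have c := Matrix.trace_mul_comm R (A * R)
        simp only [hP, add_mul, mul_add, Matrix.trace_add, Matrix.smul_mul, Matrix.mul_smul,
          Matrix.trace_smul, smul_eq_mul, hAA, hRR, c, p01]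
        simp
        nlinarith
      have hP10 : P 1 0 = 0 := by simpa [hP] using h
      rw [Matrix.trace_fin_two] at hP0 hPP
      simp only [Matrix.mul_apply, Fin.sum_univ_two, hP10] at hPP
      nlinarith [sq_nonneg (P 0 0), sq_nonneg (P 1 1)]
    · exact ⟨-1, Or.inr rfl, by linarith⟩
  have hee : e * e = 1 := by rcases he with rfl | rfl <;> norm_num
  have hss : s * s = 1 := by rcases hs with rfl | rfl <;> norm_num
  have htt : t * t = 1 := by rcases ht with rfl | rfl <;> norm_num
  refine ⟨![(e * s) • (A * R), e • R, (e * t) • (R * B)], ?_, ?_, ?_, ?_, ?_, ?_⟩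
  · intro i
    fin_cases i <;> simp [Matrix.trace_smul, htr, htA, htB]
  · intro i
    fin_cases i
    · simp only [Fin.zero_eta, Matrix.cons_val_zero, Matrix.smul_mul, Matrix.mul_smul, hAA, smul_smul]
      rw [show e * s * (e * s) = (e * e) * (s * s) by ring, hee, hss]; simp
    · simp [hRR, smul_smul, hee]
    · simp [hBB, smul_smul]
      rw [show e * t * (e * t) = (e * e) * (t * t) by ring, hee, htt]; simp
  · have q01 : ((e * s) • (A * R) * e • R).trace < -2 := by
      rw [Matrix.smul_mul, Matrix.mul_smul, p01, smul_smul, Matrix.trace_smul, smul_eq_mul]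
      calc _ = (e * e) * (s * A.trace) := by ring
        _ < -2 := by rw [hee]; linarith
    have q12 : (e • R * (e * t) • (R * B)).trace < -2 := by
      rw [Matrix.smul_mul, Matrix.mul_smul, p12, smul_smul, Matrix.trace_smul, smul_eq_mul]
      calc _ = (e * e) * (t * B.trace) := by ring
        _ < -2 := by rw [hee]; linarith
    have q02 : ((e * s) • (A * R) * (e * t) • (R * B)).trace < -2 := by
      rw [Matrix.smul_mul, Matrix.mul_smul, p02, smul_smul, Matrix.trace_smul, smul_eq_mul]
      calc _ = (e * e) * (s * t * (A * B).trace) := by ring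
        _ < -2 := by rw [hee]; linarith
    intro i j hij
    fin_cases i <;> fin_cases j
    · exact absurd rfl hij
    · exact q01
    · exact q02
    · exact (Matrix.trace_mul_comm _ _).trans_lt q01
    · exact absurd rfl hij
    · exact q12
    · exact (Matrix.trace_mul_comm _ _).trans_lt q02
    · exact (Matrix.trace_mul_comm _ _).trans_lt q12
    · exact absurd rfl hij
  · simp only [Matrix.cons_val_zero, Matrix.cons_val_one, Matrix.smul_apply, smul_eq_mul]
    linarith
  · have : (e * s) • (A * R) * e • R = s • A := by
      rw [Matrix.smul_mul, Matrix.mul_smul, p01, smul_smul,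
        show e * s * e = (e * e) * s by ring, hee, one_mul]
    simp only [Matrix.cons_val_zero, Matrix.cons_val_one, this]
    rcases hs with rfl | rfl <;> simp
  · have : e • R * (e * t) • (R * B) = t • B := by
      rw [Matrix.smul_mul, Matrix.mul_smul, p12, smul_smul,
        show e * (e * t) = (e * e) * t by ring, hee, one_mul]
    simp only [Matrix.cons_val_one, Matrix.cons_val, this]
    rcases ht with rfl | rfl <;> simp

/-! ### The letters acting on the cones -/

/-- The matrix substituted for a letter of the free group. -/
def letterMat (A B : SL2) (s : Bool × Bool) : SL2 :=
  cond s.2 (if s.1 then A else B) (if s.1 then A else B)⁻¹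

lemma letterMat_eq {A B : SL2} {Y : Fin 3 → Matrix (Fin 2) (Fin 2) ℝ}
    (hsq : ∀ i, Y i * Y i = 1) (hA : A.1 = Y 0 * Y 1 ∨ A.1 = -(Y 0 * Y 1))
    (hB : B.1 = Y 1 * Y 2 ∨ B.1 = -(Y 1 * Y 2)) (s : Bool × Bool) :
    let N := if s.1 = s.2 then Y (if s.1 then 0 else 2) * Y 1
      else Y 1 * Y (if s.1 then 0 else 2)
    (letterMat A B s).1 = N ∨ (letterMat A B s).1 = -N := by
  have inv : ∀ (X : SL2) (P Q : Matrix (Fin 2) (Fin 2) ℝ), P * P = 1 → Q * Q = 1 →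
      (X.1 = P * Q ∨ X.1 = -(P * Q)) → (X⁻¹.1 = Q * P ∨ X⁻¹.1 = -(Q * P)) := by
    intro X P Q hP hQ h
    have hX : X⁻¹.1 * X.1 = 1 := congrArg Subtype.val (inv_mul_cancel X)
    have e : P * Q * (Q * P) = 1 := by
      rw [mul_assoc, ← mul_assoc Q Q P, hQ, one_mul, hP]
    rcases h with h | h
    · left
      rw [h] at hX
      exact left_inv_eq_right_inv hX e
    · right
      rw [h] at hX
      exact left_inv_eq_right_inv hX (by rw [neg_mul_neg, e])
  obtain ⟨_ | _, _ | _⟩ := s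
  · simpa [letterMat] using inv _ _ _ (hsq 1) (hsq 2) hB
  · simpa [letterMat] using hB
  · simpa [letterMat] using inv _ _ _ (hsq 0) (hsq 1) hA
  · simpa [letterMat] using hA

/-- A letter maps the exterior of the cone of its inverse onto its own cone. -/
lemma letterForm_letterMat {A B : SL2} {Y : Fin 3 → Matrix (Fin 2) (Fin 2) ℝ}
    (hsq : ∀ i, Y i * Y i = 1) (hA : A.1 = Y 0 * Y 1 ∨ A.1 = -(Y 0 * Y 1))
    (hB : B.1 = Y 1 * Y 2 ∨ B.1 = -(Y 1 * Y 2)) (s : Bool × Bool) (v : Fin 2 → ℝ) :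
    letterForm Y s ((letterMat A B s : Matrix (Fin 2) (Fin 2) ℝ) *ᵥ v) =
      -letterForm Y (s.1, !s.2) v := by
  have even : ∀ s v, letterForm Y s (-v) = letterForm Y s v := by
    intro s v
    unfold letterForm
    split_ifs <;> simp only [Matrix.mulVec_neg, qf_neg_vec]
  have main : ∀ N : Matrix (Fin 2) (Fin 2) ℝ,
      N = (if s.1 = s.2 then Y (if s.1 then 0 else 2) * Y 1
        else Y 1 * Y (if s.1 then 0 else 2)) →
      letterForm Y s (N *ᵥ v) = -letterForm Y (s.1, !s.2) v := by
    rintro N rfl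
    obtain ⟨x, y⟩ := s
    by_cases hxy : x = y
    · subst hxy
      have hx : ¬x = !x := by cases x <;> decide
      simp only [letterForm, if_true, if_neg hx, ← Matrix.mulVec_mulVec, qf_self (hsq _)]
    · obtain rfl : y = !x := by cases x <;> cases y <;> simp_all
      simp only [letterForm, hxy, if_false, Bool.not_not, if_true, Matrix.mulVec_mulVec]
      rw [← mul_assoc, hsq, one_mul, qf_self (hsq _)]
  rcases letterMat_eq hsq hA hB s with h | h
  · exact main _ h
  · rw [← main _ rfl, ← even]
    congr 1
    erw [h, Matrix.neg_mulVec, neg_neg]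

lemma exists_letterForm_pos {Y : Fin 3 → Matrix (Fin 2) (Fin 2) ℝ} (h0 : ∀ i, (Y i).trace = 0)
    (hsq : ∀ i, Y i * Y i = 1) (s : Bool × Bool) : ∃ v, 0 < letterForm Y s v := by
  obtain ⟨v, hv⟩ := exists_qf_pos (h0 (if s.1 then 0 else 2)) (hsq (if s.1 then 0 else 2))
  by_cases hs : s.1 = s.2
  · exact ⟨v, by simpa only [letterForm, if_pos hs] using hv⟩
  · refine ⟨Y 1 *ᵥ v, ?_⟩
    simpa only [letterForm, if_neg hs, Matrix.mulVec_mulVec, hsq, Matrix.one_mulVec] using hv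

lemma letterForm_le (Y : Fin 3 → Matrix (Fin 2) (Fin 2) ℝ) (s : Bool × Bool) :
    ∃ K > 0, ∀ v, letterForm Y s v ≤ K * (v 0 ^ 2 + v 1 ^ 2) := by
  obtain ⟨K, hK, h⟩ := qf_le (Y (if s.1 then 0 else 2))
  by_cases hs : s.1 = s.2
  · exact ⟨K, hK, fun v => by simpa only [letterForm, if_pos hs] using h v⟩
  · refine ⟨K * (opNorm (Y 1) ^ 2 + 1), by positivity, fun v => ?_⟩
    simp only [letterForm, if_neg hs]
    refine (h _).trans ?_
    rw [mul_assoc]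
    gcongr
    refine (norm_sq_mulVec_le _ _).trans ?_
    nlinarith [sq_nonneg (v 0), sq_nonneg (v 1)]

lemma exists_common_bound {f : Bool × Bool → ℝ} : ∃ K > 0, ∀ s, f s ≤ K := by
  obtain ⟨K, hK⟩ := (Set.finite_range f).bddAbove
  exact ⟨max K 1, by positivity, fun s => (hK ⟨s, rfl⟩).trans (le_max_left _ _)⟩

/-- **Pairs in `H_id` are group-hyperbolic** (Lemma 3.8 of Avila–Bochi–Yoccoz):
products along reduced words in the free group on `A`, `B` grow exponentially
in the word length. -/
theorem Hid_group_hyperbolic (A B : SL2) (h : (A, B) ∈ Hid) :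
    GroupHyp A B := by
  obtain ⟨Y, h0, hsq, ht, hneg, hA, hB⟩ := exists_reflections A B h
  obtain ⟨lam, hl, hpair⟩ := exists_lam h0 hsq ht hneg
  choose v hv using exists_letterForm_pos h0 hsq
  choose K hK hKv using letterForm_le Y
  obtain ⟨c', hc', hc⟩ := exists_common_bound (f := fun s => (letterForm Y s (v s))⁻¹)
  obtain ⟨W, hW, hvW⟩ := exists_common_bound (f := fun s => v s 0 ^ 2 + v s 1 ^ 2)
  obtain ⟨K', hK', hKK'⟩ := exists_common_bound (f := K)
  have hcv : ∀ s, c'⁻¹ ≤ letterForm Y s (v s) := fun s => inv_le_of_inv_le₀ (hv s) (hc s)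
  -- `C` and `τ` are square roots, the form being quadratic
  refine ⟨√(c'⁻¹ / (K' * W)), by positivity, Real.log lam / 2, ?_, fun g hg => ?_⟩
  · have := Real.log_pos hl
    positivity
  have hM : FreeGroup.lift (fun b => if b then A else B) g =
      (g.toWord.map (letterMat A B)).prod := by
    conv_lhs => rw [← FreeGroup.mk_toWord (x := g), FreeGroup.lift_mk]
    rfl
  rw [hM]
  have hred : FreeGroup.IsReduced g.toWord := FreeGroup.isReduced_toWord
  have hne : g.toWord ≠ [] := fun e => hg (FreeGroup.toWord_eq_nil_iff.1 e)
  generalize g.toWord = w at hred hne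
  obtain ⟨s, L, rfl⟩ := List.exists_cons_of_ne_nil hne
  obtain ⟨t, htv⟩ := growth hl (letterForm_letterMat hsq hA hB)
    (fun p q hpq v => letterForm_pair hsq hl hpair hpq v) hcv L s hred
  set P : Matrix (Fin 2) (Fin 2) ℝ := (((s :: L).map (letterMat A B)).prod : SL2).1
  have h1 : c'⁻¹ * lam ^ (s :: L).length ≤ K' * (opNorm P ^ 2 * W) := by
    refine htv.trans ((hKv s _).trans ?_)
    gcongr
    · exact hKK' s
    · exact (norm_sq_mulVec_le _ _).trans (by gcongr; exact hvW t)
  refine ge_iff_le.2 (le_of_sq_le_sq ?_ (norm_nonneg _))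
  rw [mul_pow, Real.sq_sqrt (by positivity), ← Real.exp_nat_mul,
    show ((2 : ℕ) : ℝ) * (Real.log lam / 2 * (s :: L).length) = (s :: L).length * Real.log lam by
      push_cast; ring,
    Real.exp_nat_mul, Real.exp_log (by linarith), div_mul_eq_mul_div, div_le_iff₀ (by positivity)]
  linarith
end

section
/- Let (A,B) ∈ SL(2,ℝ)² with tr A ≥ 2 and tr B ≥ 2. Then (A,B) is twisted if and only if there exist P ∈ SL(2,ℝ) and real numbers μ ≥ 1, ν ≥ 1, α, β with αβ < 0 such that P A P⁻¹ is the matrix with rows (μ, α) and (0, μ⁻¹) and P B P⁻¹ is the matrix with rows (ν⁻¹, 0) and (β, ν). Moreover, the product γ = αβ is the same for every such choice of (P, μ, ν, α, β); it depends only on (A,B). -/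
/-!
The statement reduces to one numerical invariant. For `A`, `B` of trace at least `2`, with larger
eigenvalues `μ`, `ν`, put `γ = tr ((A - μ⁻¹) (B - ν⁻¹))`. It depends only on the traces of `A`, `B`
and `AB`, and in a canonical basis it equals `αβ` (`gam_eq_of_canonical`); this gives the uniqueness
of `αβ`. The equivalence says that a pair is straight exactly when `γ ≥ 0`, up to the existence of
the basis.

A canonical pair is not straight. If `(A, B)` is in `H₀`, the endpoints of the invariant interval
form a basis in which each of `A` and `B` has entries of one strict sign
(`exists_sign_of_mem_H0`), the positive one when the traces are positive. A positive matrix minus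
its smaller eigenvalue has nonnegative entries, so `γ ≥ 0` on this part of `H₀`
(`gam_nonneg_of_pos`), and by continuity at every straight pair of positive traces
(`gam_nonneg_of_straight`). But `γ = αβ < 0`.

A pair that is not straight has a canonical basis. Take eigenvectors `u`, `v` of `A`, `B` for the
larger eigenvalues. If they are independent, then in the basis `u`, `v`, scaled to determinant one,
the matrices are triangular as required, up to the sign of `αβ`; if `αβ ≥ 0`, small
perturbations of `A`, `B` become positive in a common basis and so lie in `H₀`
(`straight_of_opposite_triangular`). If they are dependent, a thin cone around the common direction
is strictly invariant for small perturbations (`straight_of_common_triangular`). Both cases would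
make the pair straight.
-/

open Matrix

noncomputable section

/-! ### Topology of the projective line -/

theorem projAct_mk (A : SL2) (v : Fin 2 → ℝ) (hv : v ≠ 0)
    (h : (A : Matrix (Fin 2) (Fin 2) ℝ) *ᵥ v ≠ 0) :
    projAct A (Projectivization.mk ℝ v hv) =
      Projectivization.mk ℝ ((A : Matrix (Fin 2) (Fin 2) ℝ) *ᵥ v) h := rfl

theorem mulVec_ne_zero (A : SL2) {v : Fin 2 → ℝ} (hv : v ≠ 0) :
    (A : Matrix (Fin 2) (Fin 2) ℝ) *ᵥ v ≠ 0 := by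
  intro h
  have := (Matrix.exists_mulVec_eq_zero_iff (M := (A : Matrix (Fin 2) (Fin 2) ℝ))).1 ⟨v, hv, h⟩
  rw [A.det_coe] at this
  exact one_ne_zero this

theorem isOpen_P1_iff (U : Set P1) : IsOpen U ↔
    IsOpen {v : {v : Fin 2 → ℝ // v ≠ 0} | Projectivization.mk ℝ v.1 v.2 ∈ U} := Iff.rfl

theorem continuous_mk :
    Continuous (fun v : {v : Fin 2 → ℝ // v ≠ 0} => (Projectivization.mk ℝ v.1 v.2 : P1)) :=
  continuous_coinduced_rng

/-- The subset of the projective line where a function `q` on `ℝ²`, homogeneous of degree two,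
is positive. It is defined through a representative; homogeneity makes the choice immaterial. -/
def posSet (q : (Fin 2 → ℝ) → ℝ) : Set P1 := {x | 0 < q x.rep}

theorem mk_mem_posSet {q : (Fin 2 → ℝ) → ℝ} (hq : ∀ c v, q (c • v) = c ^ 2 * q v)
    (v : Fin 2 → ℝ) (hv : v ≠ 0) :
    (Projectivization.mk ℝ v hv : P1) ∈ posSet q ↔ 0 < q v := by
  obtain ⟨c, hc⟩ := Projectivization.exists_smul_eq_mk_rep ℝ v hv
  have h : q (Projectivization.mk ℝ v hv).rep = (c : ℝ) ^ 2 * q v := by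
    rw [← hc, ← hq]; rfl
  have hc2 : 0 < (c : ℝ) ^ 2 := by
    have := c.ne_zero
    positivity
  simp only [posSet, Set.mem_ofPred_eq, h]
  exact mul_pos_iff_of_pos_left hc2

theorem isOpen_posSet {q : (Fin 2 → ℝ) → ℝ} (hq : ∀ c v, q (c • v) = c ^ 2 * q v)
    (hc : Continuous q) : IsOpen (posSet q) := by
  rw [isOpen_P1_iff]
  simp only [mk_mem_posSet hq]
  exact isOpen_lt continuous_const (hc.comp continuous_subtype_val)

theorem nonneg_of_mk_mem_closure_posSet {q : (Fin 2 → ℝ) → ℝ}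
    (hq : ∀ c v, q (c • v) = c ^ 2 * q v) (hc : Continuous q) (v : Fin 2 → ℝ) (hv : v ≠ 0)
    (h : (Projectivization.mk ℝ v hv : P1) ∈ closure (posSet q)) : 0 ≤ q v := by
  have hq' : ∀ c v, (fun v => - q v) (c • v) = c ^ 2 * (fun v => - q v) v := by
    intro c v; simp [hq]
  by_contra hlt
  have hmem : (Projectivization.mk ℝ v hv : P1) ∈ posSet (fun v => - q v) := by
    rw [mk_mem_posSet hq']; linarith
  obtain ⟨x, hx1, hx2⟩ := mem_closure_iff.1 h _ (isOpen_posSet hq' hc.neg) hmem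
  have h1 : 0 < - q x.rep := hx1
  have h2 : 0 < q x.rep := hx2
  linarith

/-! ### Pairs of matrices positive in a common basis -/

/-- A pair of matrices that have positive entries in a common basis lies in `H₀`: the projection
of the open first quadrant of that basis is a strictly invariant interval. -/
theorem mem_H0_of_pos (A B : SL2) (Q X Y : Matrix (Fin 2) (Fin 2) ℝ) (hQ : Q.det ≠ 0)
    (hX : ∀ i j, 0 < X i j) (hY : ∀ i j, 0 < Y i j)
    (hAX : Q * (A : Matrix (Fin 2) (Fin 2) ℝ) = X * Q)
    (hBY : Q * (B : Matrix (Fin 2) (Fin 2) ℝ) = Y * Q) : (A, B) ∈ H0 := by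
  have hu : IsUnit Q.det := isUnit_iff_ne_zero.2 hQ
  have hQR : Q * Q⁻¹ = 1 := Matrix.mul_nonsing_inv Q hu
  have hRQ : Q⁻¹ * Q = 1 := Matrix.nonsing_inv_mul Q hu
  have hQRv : ∀ v, Q *ᵥ (Q⁻¹ *ᵥ v) = v := fun v => by
    rw [Matrix.mulVec_mulVec, hQR, Matrix.one_mulVec]
  have hRQv : ∀ v, Q⁻¹ *ᵥ (Q *ᵥ v) = v := fun v => by
    rw [Matrix.mulVec_mulVec, hRQ, Matrix.one_mulVec]
  have hRne : ∀ v, v ≠ 0 → Q⁻¹ *ᵥ v ≠ 0 := fun v hv h => hv (by rw [← hQRv v, h, mulVec_zero])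
  have hQne : ∀ v, v ≠ 0 → Q *ᵥ v ≠ 0 := fun v hv h => hv (by rw [← hRQv v, h, mulVec_zero])
  set q : (Fin 2 → ℝ) → ℝ := fun v => (Q *ᵥ v) 0 * (Q *ᵥ v) 1 with hqdef
  have hq : ∀ c v, q (c • v) = c ^ 2 * q v := by
    intro c v
    simp only [hqdef, Matrix.mulVec_smul, Pi.smul_apply, smul_eq_mul]; ring
  have hc : Continuous q := by
    simp only [hqdef, Matrix.mulVec, dotProduct, Fin.sum_univ_two]; fun_prop
  have key : ∀ (M : SL2) (Z : Matrix (Fin 2) (Fin 2) ℝ), (∀ i j, 0 < Z i j) →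
      Q * (M : Matrix (Fin 2) (Fin 2) ℝ) = Z * Q →
      projAct M '' closure (posSet q) ⊆ posSet q := by
    rintro M Z hZ hMZ _ ⟨x, hx, rfl⟩
    induction x using Projectivization.ind with
    | h v hv =>
    have h0 := nonneg_of_mk_mem_closure_posSet hq hc v hv hx
    rw [projAct_mk M v hv (mulVec_ne_zero M hv), mk_mem_posSet hq]
    have hne := hQne v hv
    have e : Q *ᵥ ((M : Matrix (Fin 2) (Fin 2) ℝ) *ᵥ v) = Z *ᵥ (Q *ᵥ v) := by
      rw [Matrix.mulVec_mulVec, Matrix.mulVec_mulVec, hMZ]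
    simp only [hqdef, e] at h0 ⊢
    generalize Q *ᵥ v = u at h0 hne ⊢
    simp only [Matrix.mulVec, dotProduct, Fin.sum_univ_two]
    have e2 : (Z 0 0 * u 0 + Z 0 1 * u 1) * (Z 1 0 * u 0 + Z 1 1 * u 1) =
      Z 0 0 * Z 1 0 * u 0 ^ 2 + (Z 0 0 * Z 1 1 + Z 0 1 * Z 1 0) * (u 0 * u 1)
        + Z 0 1 * Z 1 1 * u 1 ^ 2 := by ring
    rw [e2]
    have z00 := hZ 0 0
    have z01 := hZ 0 1
    have z10 := hZ 1 0
    have z11 := hZ 1 1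
    by_cases h : u 0 = 0
    · have h1 : u 1 ≠ 0 := fun h1 => hne (by ext i; fin_cases i <;> simp [h, h1])
      have : 0 < Z 0 1 * Z 1 1 * u 1 ^ 2 := by positivity
      have : 0 ≤ Z 0 0 * Z 1 0 * u 0 ^ 2 := by positivity
      have : 0 ≤ (Z 0 0 * Z 1 1 + Z 0 1 * Z 1 0) * (u 0 * u 1) := by positivity
      linarith
    · have : 0 ≤ Z 0 1 * Z 1 1 * u 1 ^ 2 := by positivity
      have : 0 < Z 0 0 * Z 1 0 * u 0 ^ 2 := by positivity
      have : 0 ≤ (Z 0 0 * Z 1 1 + Z 0 1 * Z 1 0) * (u 0 * u 1) := by positivity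
      linarith
  refine ⟨posSet q, ⟨isOpen_posSet hq hc, ?_, ?_⟩, key A X hX hAX, key B Y hY hBY⟩
  · -- the interval is the continuous image of `(0, ∞)` under `t ↦ [Q⁻¹ (1, t)]`
    have hne : ∀ t : ℝ, Q⁻¹ *ᵥ ![1, t] ≠ 0 := fun t =>
      hRne _ (fun h => by simpa using congrFun h 0)
    have hf : Continuous fun t : ℝ => (Projectivization.mk ℝ (Q⁻¹ *ᵥ ![1, t]) (hne t) : P1) := by
      refine continuous_mk.comp (Continuous.subtype_mk (f := fun t : ℝ => Q⁻¹ *ᵥ ![1, t]) ?_ hne)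
      exact Continuous.matrix_mulVec continuous_const (by fun_prop)
    have himg : posSet q =
        (fun t : ℝ => (Projectivization.mk ℝ (Q⁻¹ *ᵥ ![1, t]) (hne t) : P1)) '' Set.Ioi 0 := by
      ext x
      induction x using Projectivization.ind with
      | h v hv =>
      rw [mk_mem_posSet hq]
      constructor
      · intro h
        simp only [hqdef] at h
        have h0 : (Q *ᵥ v) 0 ≠ 0 := fun h0 => by simp [h0] at h
        refine ⟨(Q *ᵥ v) 1 / (Q *ᵥ v) 0, ?_, ?_⟩
        · have : (Q *ᵥ v) 1 / (Q *ᵥ v) 0 = ((Q *ᵥ v) 0 * (Q *ᵥ v) 1) / (Q *ᵥ v) 0 ^ 2 := by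
            field_simp
          rw [Set.mem_Ioi, this]
          positivity
        · rw [Projectivization.mk_eq_mk_iff']
          refine ⟨((Q *ᵥ v) 0)⁻¹, ?_⟩
          rw [← hRQv v, ← Matrix.mulVec_smul, hRQv v]
          congr 1
          ext i
          fin_cases i
          · exact inv_mul_cancel₀ h0
          · exact (div_eq_inv_mul _ _).symm
      · rintro ⟨t, ht, hE⟩
        rw [← mk_mem_posSet hq v hv, ← hE, mk_mem_posSet hq]
        simp only [hqdef, hQRv]
        simpa using ht
    rw [himg]
    exact isConnected_Ioi.image _ hf.continuousOn
  · have e0 : (![1, 0] : Fin 2 → ℝ) ≠ 0 := fun h => by simpa using congrFun h 0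
    have e1 : (![0, 1] : Fin 2 → ℝ) ≠ 0 := fun h => by simpa using congrFun h 1
    refine ⟨Projectivization.mk ℝ _ (hRne _ e0), ?_, Projectivization.mk ℝ _ (hRne _ e1), ?_, ?_⟩
    · rw [Set.mem_compl_iff, mk_mem_posSet hq]; simp only [hqdef, hQRv]; simp
    · rw [Set.mem_compl_iff, mk_mem_posSet hq]; simp only [hqdef, hQRv]; simp
    · rw [Ne, Projectivization.mk_eq_mk_iff']
      rintro ⟨c, hc⟩
      have := congrArg (fun v => (Q *ᵥ v) 0) hc
      simp only [Matrix.mulVec_smul, hQRv] at this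
      simp at this

/-- The affine chart of the projective line centred at the point `[p]` at infinity: the vector
`(p₁, -p₀) + t p`, which is not a multiple of `p`. -/
def chart (p : Fin 2 → ℝ) (t : ℝ) : Fin 2 → ℝ := ![p 1 + t * p 0, -p 0 + t * p 1]

theorem normSq_pos {p : Fin 2 → ℝ} (hp : p ≠ 0) : 0 < p 0 ^ 2 + p 1 ^ 2 := by
  by_contra h
  have h0 : p 0 = 0 := by nlinarith [sq_nonneg (p 0), sq_nonneg (p 1)]
  have h1 : p 1 = 0 := by nlinarith [sq_nonneg (p 0), sq_nonneg (p 1)]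
  exact hp (by ext i; fin_cases i <;> simp [h0, h1])

theorem chart_ne_zero {p : Fin 2 → ℝ} (hp : p ≠ 0) (t : ℝ) : chart p t ≠ 0 := by
  intro h
  have h0 := congrFun h 0
  have h1 := congrFun h 1
  simp [chart] at h0 h1
  have : p 0 ^ 2 + p 1 ^ 2 = 0 := by linear_combination p 1 * h0 - p 0 * h1
  exact (normSq_pos hp).ne' this

/-- If `I` is seen in the chart at infinity `[p]` as the interval with endpoints `a < b`, then a
matrix mapping the closure of `I` into `I` has, in the basis given by the endpoints, entries of
one strict sign. -/
theorem sign_matrix {I : Set P1} {p : Fin 2 → ℝ} (hp : p ≠ 0) {a b : ℝ} (hab : a < b)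
    (hcl : ∀ t ∈ Set.Icc a b, (Projectivization.mk ℝ (chart p t) (chart_ne_zero hp t) : P1)
      ∈ closure I)
    (hI : ∀ (v : Fin 2 → ℝ) (hv : v ≠ 0), (Projectivization.mk ℝ v hv : P1) ∈ I →
      v 0 * p 1 - v 1 * p 0 ≠ 0 ∧
      a < (v 0 * p 0 + v 1 * p 1) / (v 0 * p 1 - v 1 * p 0) ∧
      (v 0 * p 0 + v 1 * p 1) / (v 0 * p 1 - v 1 * p 0) < b)
    (M : SL2) (hM : projAct M '' closure I ⊆ I) :
    ∃ X : Matrix (Fin 2) (Fin 2) ℝ,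
      !![b * p 1 - p 0, -b * p 0 - p 1; p 0 - a * p 1, p 1 + a * p 0] *
        (M : Matrix (Fin 2) (Fin 2) ℝ) =
      X * !![b * p 1 - p 0, -b * p 0 - p 1; p 0 - a * p 1, p 1 + a * p 0] ∧
      ((∀ i j, 0 < X i j) ∨ ∀ i j, X i j < 0) := by
  have hN := normSq_pos hp
  have hba : 0 < b - a := sub_pos.2 hab
  -- the coordinates of `M (chart p t)` with respect to `(p₁, -p₀)` and `p`, up to a factor
  set m := (M : Matrix (Fin 2) (Fin 2) ℝ) with hm
  set L : ℝ → ℝ := fun t => (m *ᵥ chart p t) 0 * p 1 - (m *ᵥ chart p t) 1 * p 0 with hL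
  set Y : ℝ → ℝ := fun t => (m *ᵥ chart p t) 0 * p 0 + (m *ᵥ chart p t) 1 * p 1 with hY
  have hLY : ∀ t ∈ Set.Icc a b, L t ≠ 0 ∧ a < Y t / L t ∧ Y t / L t < b := fun t ht =>
    hI _ (mulVec_ne_zero M (chart_ne_zero hp t)) (hM ⟨_, hcl t ht, rfl⟩)
  have hLc : Continuous L := by
    simp only [hL, Matrix.mulVec, dotProduct, Fin.sum_univ_two, chart, Matrix.cons_val_zero,
      Matrix.cons_val_one]
    fun_prop
  have ha := hLY a ⟨le_refl _, hab.le⟩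
  have hb := hLY b ⟨hab.le, le_refl _⟩
  have hXeq : !![b * p 1 - p 0, -b * p 0 - p 1; p 0 - a * p 1, p 1 + a * p 0] * m =
      !![(b * L a - Y a) / ((p 0 ^ 2 + p 1 ^ 2) * (b - a)),
         (b * L b - Y b) / ((p 0 ^ 2 + p 1 ^ 2) * (b - a));
         (Y a - a * L a) / ((p 0 ^ 2 + p 1 ^ 2) * (b - a)),
         (Y b - a * L b) / ((p 0 ^ 2 + p 1 ^ 2) * (b - a))] *
      !![b * p 1 - p 0, -b * p 0 - p 1; p 0 - a * p 1, p 1 + a * p 0] := by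
    have hD : (p 0 ^ 2 + p 1 ^ 2) * (b - a) ≠ 0 := by positivity
    obtain ⟨D, hDeq⟩ : ∃ D, D = (p 0 ^ 2 + p 1 ^ 2) * (b - a) := ⟨_, rfl⟩
    rw [← hDeq] at hD ⊢
    ext i j
    fin_cases i <;> fin_cases j <;>
    · simp [Matrix.mul_apply, Fin.sum_univ_two, hL, hY, Matrix.mulVec, dotProduct, chart]
      field_simp
      rw [hDeq]
      ring
  refine ⟨_, hXeq, ?_⟩
  have hpos : ∀ t, 0 < L t → a < Y t / L t → Y t / L t < b →
      0 < b * L t - Y t ∧ 0 < Y t - a * L t := by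
    intro t h h1 h2
    rw [lt_div_iff₀ h] at h1
    rw [div_lt_iff₀ h] at h2
    constructor <;> linarith
  have hneg : ∀ t, L t < 0 → a < Y t / L t → Y t / L t < b →
      b * L t - Y t < 0 ∧ Y t - a * L t < 0 := by
    intro t h h1 h2
    rw [lt_div_iff_of_neg h] at h1
    rw [div_lt_iff_of_neg h] at h2
    constructor <;> linarith
  have hD : 0 < (p 0 ^ 2 + p 1 ^ 2) * (b - a) := by positivity
  rcases lt_or_gt_of_ne ha.1 with h1 | h1 <;> rcases lt_or_gt_of_ne hb.1 with h2 | h2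
  · right
    have ⟨u1, u2⟩ := hneg a h1 ha.2.1 ha.2.2
    have ⟨u3, u4⟩ := hneg b h2 hb.2.1 hb.2.2
    intro i j
    fin_cases i <;> fin_cases j <;> simp only [Fin.zero_eta, Fin.mk_one, Matrix.of_apply, Matrix.cons_val_zero, Matrix.cons_val_one] <;>
      apply div_neg_of_neg_of_pos <;> assumption
  · exfalso
    obtain ⟨t, ht, h0⟩ := intermediate_value_Icc hab.le hLc.continuousOn ⟨h1.le, h2.le⟩
    exact (hLY t ht).1 h0
  · exfalso
    obtain ⟨t, ht, h0⟩ := intermediate_value_Icc' hab.le hLc.continuousOn ⟨h2.le, h1.le⟩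
    exact (hLY t ht).1 h0
  · left
    have ⟨u1, u2⟩ := hpos a h1 ha.2.1 ha.2.2
    have ⟨u3, u4⟩ := hpos b h2 hb.2.1 hb.2.2
    intro i j
    fin_cases i <;> fin_cases j <;> simp only [Fin.zero_eta, Fin.mk_one, Matrix.of_apply, Matrix.cons_val_zero, Matrix.cons_val_one] <;>
      apply div_pos <;> assumption

/-- Converse of `mem_H0_of_pos`, up to the signs of the two matrices. -/
theorem exists_sign_of_mem_H0 (A B : SL2) (h : (A, B) ∈ H0) :
    ∃ Q X Y : Matrix (Fin 2) (Fin 2) ℝ, Q.det ≠ 0 ∧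
      Q * (A : Matrix (Fin 2) (Fin 2) ℝ) = X * Q ∧ Q * (B : Matrix (Fin 2) (Fin 2) ℝ) = Y * Q ∧
      ((∀ i j, 0 < X i j) ∨ ∀ i j, X i j < 0) ∧ ((∀ i j, 0 < Y i j) ∨ ∀ i j, Y i j < 0) := by
  obtain ⟨I, ⟨hIo, hIc, hIn⟩, hA, hB⟩ := h
  simp only at hA hB
  -- a point at infinity outside the closure of `I`
  obtain ⟨p, hp, hpI⟩ : ∃ (p : Fin 2 → ℝ) (hp : p ≠ 0),
      (Projectivization.mk ℝ p hp : P1) ∉ closure I := by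
    obtain ⟨x, hx⟩ := hIn.nonempty
    induction x using Projectivization.ind with
    | h v hv =>
    refine ⟨_, mulVec_ne_zero A⁻¹ hv, fun hmem => hx ?_⟩
    have : projAct A (Projectivization.mk ℝ _ (mulVec_ne_zero A⁻¹ hv)) ∈ I := hA ⟨_, hmem, rfl⟩
    rw [projAct_mk _ _ _ (mulVec_ne_zero A (mulVec_ne_zero A⁻¹ hv))] at this
    have e : (A : Matrix (Fin 2) (Fin 2) ℝ) *ᵥ
        (((A⁻¹ : SL2) : Matrix (Fin 2) (Fin 2) ℝ) *ᵥ v) = v := by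
      rw [Matrix.mulVec_mulVec, ← Matrix.SpecialLinearGroup.coe_mul]
      simp
    simpa only [e] using this
  have hN := normSq_pos hp
  set φ : ℝ → P1 := fun t => Projectivization.mk ℝ (chart p t) (chart_ne_zero hp t) with hφ
  have hφc : Continuous φ := by
    refine continuous_mk.comp (Continuous.subtype_mk (f := chart p) ?_ (chart_ne_zero hp))
    unfold chart
    fun_prop
  set S : Set ℝ := φ ⁻¹' I with hS
  have hSo : IsOpen S := hIo.preimage hφc
  have hcoord : ∀ (v : Fin 2 → ℝ) (hv : v ≠ 0), (Projectivization.mk ℝ v hv : P1) ∈ I →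
      v 0 * p 1 - v 1 * p 0 ≠ 0 ∧
      (v 0 * p 0 + v 1 * p 1) / (v 0 * p 1 - v 1 * p 0) ∈ S := by
    intro v hv hvI
    have hne : v 0 * p 1 - v 1 * p 0 ≠ 0 := by
      intro h0
      apply hpI
      apply subset_closure
      convert hvI using 1
      symm
      rw [Projectivization.mk_eq_mk_iff']
      refine ⟨(v 0 * p 0 + v 1 * p 1) / (p 0 ^ 2 + p 1 ^ 2), ?_⟩
      ext i
      fin_cases i
      · simp; field_simp; linear_combination (-p 1) * h0
      · simp; field_simp; linear_combination (p 0) * h0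
    refine ⟨hne, ?_⟩
    simp only [hS, hφ, Set.mem_preimage]
    convert hvI using 1
    rw [Projectivization.mk_eq_mk_iff']
    refine ⟨(p 0 ^ 2 + p 1 ^ 2) / (v 0 * p 1 - v 1 * p 0), ?_⟩
    ext i
    obtain ⟨d, hd⟩ : ∃ d, d = v 0 * p 1 - v 1 * p 0 := ⟨_, rfl⟩
    rw [← hd] at hne ⊢
    fin_cases i <;> simp [chart] <;> field_simp <;> rw [hd] <;> ring
  have hSn : S.Nonempty := by
    obtain ⟨x, hx⟩ := hIc.nonempty
    induction x using Projectivization.ind with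
    | h v hv => exact ⟨_, (hcoord v hv hx).2⟩
  -- a gap `t` in `S` would let the sign of a quadratic form separate `I`
  have hSoc : S.OrdConnected := by
    refine Set.ordConnected_of_Ioo fun t₁ h₁ t₂ h₂ _ t ht => ?_
    by_contra htS
    set q : (Fin 2 → ℝ) → ℝ := fun v => ((v 0 * p 0 + v 1 * p 1) - t * (v 0 * p 1 - v 1 * p 0)) *
      (v 0 * p 1 - v 1 * p 0) with hqdef
    have hq : ∀ c v, q (c • v) = c ^ 2 * q v := by
      intro c v; simp only [hqdef, Pi.smul_apply, smul_eq_mul]; ring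
    have hq' : ∀ c v, (fun v => - q v) (c • v) = c ^ 2 * (fun v => - q v) v := by
      intro c v; simp [hq]
    have hqc : Continuous q := by simp only [hqdef]; fun_prop
    have hqφ : ∀ s, q (chart p s) = (p 0 ^ 2 + p 1 ^ 2) ^ 2 * (s - t) := by
      intro s; simp [hqdef, chart]; ring
    obtain ⟨x, hxI, hx1, hx2⟩ := hIc.isPreconnected (posSet q) (posSet fun v => - q v)
      (isOpen_posSet hq hqc) (isOpen_posSet hq' hqc.neg) (by
        intro x hx
        induction x using Projectivization.ind with
        | h v hv =>
        obtain ⟨hne, hs⟩ := hcoord v hv hx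
        rw [Set.mem_union, mk_mem_posSet hq, mk_mem_posSet hq']
        have : q v ≠ 0 := by
          intro h0
          rcases mul_eq_zero.1 h0 with h0 | h0
          · apply htS
            convert hs using 1
            rw [eq_div_iff hne]; linarith
          · exact hne h0
        rcases lt_or_gt_of_ne this with h | h
        · right; linarith
        · left; exact h)
      ⟨φ t₂, h₂, by
        simp only [hφ]
        rw [mk_mem_posSet hq, hqφ]
        have := sub_pos.2 ht.2
        positivity⟩
      ⟨φ t₁, h₁, by
        simp only [hφ]
        rw [mk_mem_posSet hq', hqφ]
        have := sub_pos.2 ht.1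
        have : 0 < (p 0 ^ 2 + p 1 ^ 2) ^ 2 * (t - t₁) := by positivity
        linarith⟩
    have u1 : 0 < q x.rep := hx1
    have u2 : 0 < - q x.rep := hx2
    linarith
  -- `[p]` is the limit of `φ t` as `t → ±∞`, so `S` is bounded
  obtain ⟨R, hR⟩ : ∃ R : ℝ, ∀ t ∈ S, |t| ≤ R := by
    set ψ : ℝ → (Fin 2 → ℝ) := fun s => ![s * p 1 + p 0, -s * p 0 + p 1] with hψ
    have hψne : ∀ s, ψ s ≠ 0 := by
      intro s h
      have h0 := congrFun h 0
      have h1 := congrFun h 1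
      simp [hψ] at h0 h1
      have : p 0 ^ 2 + p 1 ^ 2 = 0 := by linear_combination p 0 * h0 + p 1 * h1
      exact hN.ne' this
    have hψc : Continuous fun s => (Projectivization.mk ℝ (ψ s) (hψne s) : P1) := by
      refine continuous_mk.comp (Continuous.subtype_mk (f := ψ) ?_ hψne)
      simp only [hψ]; fun_prop
    have hop : IsOpen ((fun s => (Projectivization.mk ℝ (ψ s) (hψne s) : P1)) ⁻¹' (closure I)ᶜ) :=
      isClosed_closure.isOpen_compl.preimage hψc
    have h0 : (0 : ℝ) ∈ (fun s => (Projectivization.mk ℝ (ψ s) (hψne s) : P1)) ⁻¹' (closure I)ᶜ := by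
      have e : ψ 0 = p := by ext i; fin_cases i <;> simp [hψ]
      simpa only [Set.mem_preimage, Set.mem_compl_iff, e] using hpI
    obtain ⟨δ, hδ, hball⟩ := Metric.isOpen_iff.1 hop 0 h0
    refine ⟨1 / δ, fun t ht => ?_⟩
    by_contra hlt
    push Not at hlt
    have ht0 : t ≠ 0 := by
      rintro rfl
      have : 0 < 1 / δ := by positivity
      simp at hlt
      linarith
    have hmem : t⁻¹ ∈ Metric.ball (0 : ℝ) δ := by
      rw [Metric.mem_ball, dist_zero_right, Real.norm_eq_abs, abs_inv]
      rw [div_lt_iff₀ hδ] at hlt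
      rw [inv_lt_iff_one_lt_mul₀ (abs_pos.2 ht0)]
      linarith
    apply hball hmem
    apply subset_closure
    have : φ t ∈ I := ht
    convert this using 1
    simp only [hφ]
    rw [Projectivization.mk_eq_mk_iff']
    refine ⟨t⁻¹, ?_⟩
    ext i
    fin_cases i <;> simp [chart, hψ] <;> field_simp
  have hbb : BddBelow S := ⟨-R, fun t ht => (abs_le.1 (hR t ht)).1⟩
  have hba : BddAbove S := ⟨R, fun t ht => (abs_le.1 (hR t ht)).2⟩
  have hSb : ∀ t ∈ S, sInf S < t ∧ t < sSup S := by
    intro t ht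
    obtain ⟨ε, hε, hball⟩ := Metric.isOpen_iff.1 hSo t ht
    have h1 : t - ε / 2 ∈ S := hball (by
      rw [Metric.mem_ball, Real.dist_eq, show t - ε / 2 - t = -(ε / 2) by ring, abs_neg,
        abs_of_pos (by positivity)]; linarith)
    have h2 : t + ε / 2 ∈ S := hball (by
      rw [Metric.mem_ball, Real.dist_eq, show t + ε / 2 - t = (ε / 2) by ring,
        abs_of_pos (by positivity)]; linarith)
    have := csInf_le hbb h1
    have := le_csSup hba h2
    constructor <;> linarith
  have hab : sInf S < sSup S := by
    obtain ⟨t, ht⟩ := hSn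
    exact (hSb t ht).1.trans (hSb t ht).2
  have hIcc : ∀ t ∈ Set.Icc (sInf S) (sSup S), φ t ∈ closure I := by
    intro t ht
    have hsub : Set.Icc (sInf S) (sSup S) ⊆ closure S := by
      rw [← closure_Ioo hab.ne]
      exact closure_mono
        (IsConnected.Ioo_csInf_csSup_subset ⟨hSn, hSoc.isPreconnected⟩ hbb hba)
    exact (hφc.closure_preimage_subset I) (hsub ht)
  have hI' : ∀ (v : Fin 2 → ℝ) (hv : v ≠ 0), (Projectivization.mk ℝ v hv : P1) ∈ I →
      v 0 * p 1 - v 1 * p 0 ≠ 0 ∧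
      sInf S < (v 0 * p 0 + v 1 * p 1) / (v 0 * p 1 - v 1 * p 0) ∧
      (v 0 * p 0 + v 1 * p 1) / (v 0 * p 1 - v 1 * p 0) < sSup S := fun v hv hvI =>
    ⟨(hcoord v hv hvI).1, hSb _ (hcoord v hv hvI).2⟩
  obtain ⟨X, hX, hXs⟩ := sign_matrix hp hab hIcc hI' A hA
  obtain ⟨Y, hY, hYs⟩ := sign_matrix hp hab hIcc hI' B hB
  refine ⟨_, X, Y, ?_, hX, hY, hXs, hYs⟩
  have : (!![sSup S * p 1 - p 0, -sSup S * p 0 - p 1; p 0 - sInf S * p 1, p 1 + sInf S * p 0]).det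
      = (sSup S - sInf S) * (p 0 ^ 2 + p 1 ^ 2) := by
    rw [Matrix.det_fin_two_of]; ring
  rw [this]
  have := sub_pos.2 hab
  positivity

/-! ### The invariant `γ` -/

/-- The eigenvalue of smaller modulus of a matrix in `SL(2,ℝ)` of trace `t ≥ 2`. For `|t| < 2`
the square root is `0`, which keeps the function continuous everywhere. -/
def lamS (t : ℝ) : ℝ := (t - √(t ^ 2 - 4)) / 2

/-- The number `tr ((A - l) (B - m))`, expanded, where `l` and `m` are the smaller eigenvalues of
`A` and `B`. -/
def gam (A B : SL2) : ℝ :=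
  trace2 (A * B) - lamS (trace2 B) * trace2 A - lamS (trace2 A) * trace2 B
    + 2 * lamS (trace2 A) * lamS (trace2 B)

theorem continuous_trace2 : Continuous trace2 := by
  unfold trace2
  fun_prop

theorem continuous_gam : Continuous fun p : SL2 × SL2 => gam p.1 p.2 := by
  have h1 := continuous_trace2.comp (continuous_fst (X := SL2) (Y := SL2))
  have h2 := continuous_trace2.comp (continuous_snd (X := SL2) (Y := SL2))
  have h3 : Continuous fun p : SL2 × SL2 => trace2 (p.1 * p.2) := by
    unfold trace2
    simp only [Matrix.SpecialLinearGroup.coe_mul]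
    fun_prop
  have hl : Continuous lamS := by unfold lamS; fun_prop
  have h4 := hl.comp h1
  have h5 := hl.comp h2
  simp only [Function.comp_def] at h1 h2 h4 h5
  unfold gam
  fun_prop

theorem lamS_add_inv {m : ℝ} (hm : 1 ≤ m) : lamS (m + m⁻¹) = m⁻¹ := by
  have h0 : m ≠ 0 := by positivity
  have h1 : m⁻¹ ≤ 1 := inv_le_one_of_one_le₀ hm
  have h2 : (m + m⁻¹) ^ 2 - 4 = (m - m⁻¹) ^ 2 := by field_simp; ring
  rw [lamS, h2, Real.sqrt_sq (by linarith)]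
  ring

theorem trace2_conj (P A : SL2) : trace2 (P * A * P⁻¹) = trace2 A := by
  unfold trace2
  rw [Matrix.SpecialLinearGroup.coe_mul, Matrix.trace_mul_comm, ← Matrix.SpecialLinearGroup.coe_mul,
    ← mul_assoc, inv_mul_cancel, one_mul]

/-- In a canonical basis `γ` is the product of the off-diagonal entries. -/
theorem gam_eq_of_canonical {A B P : SL2} {m n a b : ℝ} (hm : 1 ≤ m) (hn : 1 ≤ n)
    (hA : ((P * A * P⁻¹ : SL2) : Matrix (Fin 2) (Fin 2) ℝ) = !![m, a; 0, m⁻¹])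
    (hB : ((P * B * P⁻¹ : SL2) : Matrix (Fin 2) (Fin 2) ℝ) = !![n⁻¹, 0; b, n]) :
    gam A B = a * b := by
  have tA : trace2 A = m + m⁻¹ := by
    rw [← trace2_conj P, trace2, hA, Matrix.trace_fin_two_of]
  have tB : trace2 B = n + n⁻¹ := by
    rw [← trace2_conj P, trace2, hB, Matrix.trace_fin_two_of, add_comm]
  have tAB : trace2 (A * B) = m * n⁻¹ + a * b + m⁻¹ * n := by
    rw [← trace2_conj P, show P * (A * B) * P⁻¹ = (P * A * P⁻¹) * (P * B * P⁻¹) by group, trace2,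
      Matrix.SpecialLinearGroup.coe_mul, hA, hB]
    simp [Matrix.trace_fin_two]
  rw [gam, tAB, tA, tB, lamS_add_inv hm, lamS_add_inv hn]
  ring

theorem lamS_le_diag {x y z w : ℝ} (hx : 0 < x) (hy : 0 < y) (hdet : z * w - x * y = 1) :
    lamS (z + w) ≤ z ∧ lamS (z + w) ≤ w := by
  have h1 : w - z ≤ √((z + w) ^ 2 - 4) := Real.le_sqrt_of_sq_le (by nlinarith [mul_pos hx hy])
  have h2 : z - w ≤ √((z + w) ^ 2 - 4) := Real.le_sqrt_of_sq_le (by nlinarith [mul_pos hx hy])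
  unfold lamS
  constructor <;> linarith

/-- For positive matrices, subtracting the smaller eigenvalue leaves a nonnegative matrix, so
`γ` is the trace of a product of nonnegative matrices. -/
theorem gam_nonneg_of_pos (A B : SL2) (Q X Y : Matrix (Fin 2) (Fin 2) ℝ) (hQ : Q.det ≠ 0)
    (hX : ∀ i j, 0 < X i j) (hY : ∀ i j, 0 < Y i j)
    (hAX : Q * (A : Matrix (Fin 2) (Fin 2) ℝ) = X * Q)
    (hBY : Q * (B : Matrix (Fin 2) (Fin 2) ℝ) = Y * Q) : 0 ≤ gam A B := by
  have hu : IsUnit Q.det := isUnit_iff_ne_zero.2 hQ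
  have hRQ : Q⁻¹ * Q = 1 := Matrix.nonsing_inv_mul Q hu
  have hQR : Q * Q⁻¹ = 1 := Matrix.mul_nonsing_inv Q hu
  have eA : X = Q * (A : Matrix (Fin 2) (Fin 2) ℝ) * Q⁻¹ := by
    rw [hAX, mul_assoc, hQR, mul_one]
  have eB : Y = Q * (B : Matrix (Fin 2) (Fin 2) ℝ) * Q⁻¹ := by
    rw [hBY, mul_assoc, hQR, mul_one]
  have tr : ∀ M : Matrix (Fin 2) (Fin 2) ℝ, (Q * M * Q⁻¹).trace = M.trace := by
    intro M
    rw [Matrix.trace_mul_comm, ← mul_assoc, hRQ, one_mul]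
  have tA : trace2 A = X 0 0 + X 1 1 := by
    rw [trace2, ← tr, ← eA, Matrix.trace_fin_two]
  have tB : trace2 B = Y 0 0 + Y 1 1 := by
    rw [trace2, ← tr, ← eB, Matrix.trace_fin_two]
  have tAB : trace2 (A * B) = X 0 0 * Y 0 0 + X 0 1 * Y 1 0 + (X 1 0 * Y 0 1 + X 1 1 * Y 1 1) := by
    have : X * Y = Q * ((A : Matrix (Fin 2) (Fin 2) ℝ) * B) * Q⁻¹ := by
      rw [← mul_assoc Q, hAX, mul_assoc X, hBY, mul_assoc, mul_assoc, hQR, mul_one]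
    rw [trace2, Matrix.SpecialLinearGroup.coe_mul, ← tr, ← this, Matrix.trace_fin_two]
    simp [Matrix.mul_apply, Fin.sum_univ_two]
  have det1 : ∀ (M : SL2) (Z : Matrix (Fin 2) (Fin 2) ℝ),
      Z = Q * (M : Matrix (Fin 2) (Fin 2) ℝ) * Q⁻¹ → Z 0 0 * Z 1 1 - Z 0 1 * Z 1 0 = 1 := by
    intro M Z hZ
    rw [← Matrix.det_fin_two, hZ, Matrix.det_mul_right_comm, hQR, one_mul, M.det_coe]
  obtain ⟨a1, a2⟩ := lamS_le_diag (hX 0 1) (hX 1 0) (det1 A X eA)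
  obtain ⟨b1, b2⟩ := lamS_le_diag (hY 0 1) (hY 1 0) (det1 B Y eB)
  rw [gam, tAB, tA, tB]
  nlinarith [mul_nonneg (sub_nonneg.2 a1) (sub_nonneg.2 b1),
    mul_nonneg (sub_nonneg.2 a2) (sub_nonneg.2 b2), mul_pos (hX 0 1) (hY 1 0),
    mul_pos (hX 1 0) (hY 0 1)]

theorem gam_nonneg_of_mem_H0 {A B : SL2} (h : (A, B) ∈ H0) (hA : 0 < trace2 A)
    (hB : 0 < trace2 B) : 0 ≤ gam A B := by
  obtain ⟨Q, X, Y, hQ, hAX, hBY, hX, hY⟩ := exists_sign_of_mem_H0 A B h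
  have hu : IsUnit Q.det := isUnit_iff_ne_zero.2 hQ
  -- a positive trace rules out the negative sign
  have pos : ∀ (M : SL2) (Z : Matrix (Fin 2) (Fin 2) ℝ), 0 < trace2 M →
      Q * (M : Matrix (Fin 2) (Fin 2) ℝ) = Z * Q →
      ((∀ i j, 0 < Z i j) ∨ ∀ i j, Z i j < 0) → ∀ i j, 0 < Z i j := by
    intro M Z hM hMZ hZ
    refine hZ.resolve_right fun hneg => ?_
    have e : (M : Matrix (Fin 2) (Fin 2) ℝ) = Q⁻¹ * (Z * Q) := by
      rw [← hMZ, ← mul_assoc, Matrix.nonsing_inv_mul Q hu, one_mul]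
    rw [trace2, e, Matrix.trace_mul_comm, mul_assoc, Matrix.mul_nonsing_inv Q hu, mul_one,
      Matrix.trace_fin_two] at hM
    linarith [hneg 0 0, hneg 1 1]
  exact gam_nonneg_of_pos A B Q X Y hQ (pos A X hA hAX hX) (pos B Y hB hBY hY) hAX hBY

theorem gam_nonneg_of_straight {A B : SL2} (h : Straight (A, B)) (hA : 0 < trace2 A)
    (hB : 0 < trace2 B) : 0 ≤ gam A B := by
  by_contra! hg
  have hU : IsOpen ({p : SL2 × SL2 | 0 < trace2 p.1} ∩ {p : SL2 × SL2 | 0 < trace2 p.2} ∩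
      {p : SL2 × SL2 | gam p.1 p.2 < 0}) :=
    ((isOpen_lt continuous_const (continuous_trace2.comp continuous_fst)).inter
      (isOpen_lt continuous_const (continuous_trace2.comp continuous_snd))).inter
      (isOpen_lt continuous_gam continuous_const)
  have h' : (A, B) ∈ closure H0 := h
  obtain ⟨⟨X, Y⟩, hp, hH⟩ := mem_closure_iff.1 h' _ hU ⟨⟨hA, hB⟩, hg⟩
  have h1 : 0 < trace2 X := hp.1.1
  have h2 : 0 < trace2 Y := hp.1.2
  have h3 : gam X Y < 0 := hp.2
  exact absurd (gam_nonneg_of_mem_H0 hH h1 h2) (not_le.2 h3)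

/-! ### Sufficient conditions for straightness -/

/-- A pair conjugate to the value at `0` of a continuous path of pairs is straight if, for `t > 0`,
the path takes values positive in some basis, which may vary with `t`. -/
theorem straight_of_path {A B P : SL2} (f g : ℝ → SL2) (hf : Continuous f) (hg : Continuous g)
    (hA : P * A * P⁻¹ = f 0) (hB : P * B * P⁻¹ = g 0)
    (h : ∀ t > 0, ∃ Q X Y : Matrix (Fin 2) (Fin 2) ℝ, Q.det ≠ 0 ∧
      (∀ i j, 0 < X i j) ∧ (∀ i j, 0 < Y i j) ∧
      Q * (f t : Matrix (Fin 2) (Fin 2) ℝ) = X * Q ∧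
      Q * (g t : Matrix (Fin 2) (Fin 2) ℝ) = Y * Q) : Straight (A, B) := by
  have conj : ∀ f : ℝ → SL2, Continuous f → Continuous fun t => P⁻¹ * f t * P := by
    intro f hf
    have hf' : Continuous fun t => (f t : Matrix (Fin 2) (Fin 2) ℝ) := continuous_subtype_val.comp hf
    refine continuous_induced_rng.2 ?_
    change Continuous fun t => ((P⁻¹ * f t * P : SL2) : Matrix (Fin 2) (Fin 2) ℝ)
    simp only [Matrix.SpecialLinearGroup.coe_mul]
    exact (continuous_const.mul hf').mul continuous_const
  have hc : Continuous fun t => (P⁻¹ * f t * P, P⁻¹ * g t * P) := (conj f hf).prodMk (conj g hg)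
  have h0 : (P⁻¹ * f 0 * P, P⁻¹ * g 0 * P) = (A, B) := by
    rw [← hA, ← hB]
    congr 1 <;> group
  have hlim := (hc.tendsto 0).mono_left (nhdsWithin_le_nhds (s := Set.Ioi 0))
  rw [h0] at hlim
  refine mem_closure_of_tendsto hlim ?_
  filter_upwards [self_mem_nhdsWithin] with t ht
  obtain ⟨Q, X, Y, hQ, hX, hY, hfX, hgY⟩ := h t ht
  have hPP : (P : Matrix (Fin 2) (Fin 2) ℝ) * ((P⁻¹ : SL2) : Matrix (Fin 2) (Fin 2) ℝ) = 1 := by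
    rw [← Matrix.SpecialLinearGroup.coe_mul, mul_inv_cancel, Matrix.SpecialLinearGroup.coe_one]
  have aux : ∀ (M : SL2) (Z : Matrix (Fin 2) (Fin 2) ℝ),
      Q * (M : Matrix (Fin 2) (Fin 2) ℝ) = Z * Q →
      (Q * (P : Matrix (Fin 2) (Fin 2) ℝ)) * ((P⁻¹ * M * P : SL2) : Matrix (Fin 2) (Fin 2) ℝ) =
        Z * (Q * (P : Matrix (Fin 2) (Fin 2) ℝ)) := by
    intro M Z hMZ
    rw [Matrix.SpecialLinearGroup.coe_mul, Matrix.SpecialLinearGroup.coe_mul]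
    calc _ = Q * ((P : Matrix (Fin 2) (Fin 2) ℝ) * ((P⁻¹ : SL2) : Matrix (Fin 2) (Fin 2) ℝ))
          * (M : Matrix (Fin 2) (Fin 2) ℝ) * (P : Matrix (Fin 2) (Fin 2) ℝ) := by
          simp only [mul_assoc]
      _ = _ := by rw [hPP, mul_one, hMZ, mul_assoc]
  refine mem_H0_of_pos _ _ (Q * (P : Matrix (Fin 2) (Fin 2) ℝ)) X Y ?_ hX hY
    (aux _ _ hfX) (aux _ _ hgY)
  rwa [Matrix.det_mul, P.det_coe, mul_one]

theorem continuous_SL2_mk {x y z w : ℝ → ℝ} (hx : Continuous x) (hy : Continuous y)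
    (hz : Continuous z) (hw : Continuous w)
    (hdet : ∀ t, (!![x t, y t; z t, w t] : Matrix (Fin 2) (Fin 2) ℝ).det = 1) :
    Continuous fun t => (⟨!![x t, y t; z t, w t], hdet t⟩ : SL2) := by
  refine continuous_induced_rng.2 ?_
  refine continuous_matrix fun i j => ?_
  fin_cases i <;> fin_cases j <;> simpa

/-- Distinct unstable directions with `γ ≥ 0`: filling the zero entries by a small number of the
common sign of `a` and `b` makes both matrices positive, after a change of sign of one basis
vector if needed. -/
theorem straight_of_opposite_triangular {A B P : SL2} {m n a b : ℝ} (hm : 1 ≤ m) (hn : 1 ≤ n)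
    (hab : 0 ≤ a * b)
    (hA : ((P * A * P⁻¹ : SL2) : Matrix (Fin 2) (Fin 2) ℝ) = !![m, a; 0, m⁻¹])
    (hB : ((P * B * P⁻¹ : SL2) : Matrix (Fin 2) (Fin 2) ℝ) = !![n⁻¹, 0; b, n]) :
    Straight (A, B) := by
  have hm0 : 0 < m := by linarith
  have hn0 : 0 < n := by linarith
  obtain ⟨σ, hσ, ha, hb⟩ : ∃ σ : ℝ, σ ^ 2 = 1 ∧ 0 ≤ σ * a ∧ 0 ≤ σ * b := by
    rcases mul_nonneg_iff.1 hab with h | h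
    · exact ⟨1, by norm_num, by linarith, by linarith⟩
    · exact ⟨-1, by norm_num, by linarith, by linarith⟩
  have df : ∀ t : ℝ, (!![m, a + σ * t; σ * t, (1 + (a + σ * t) * (σ * t)) / m] :
      Matrix (Fin 2) (Fin 2) ℝ).det = 1 := by
    intro t; rw [Matrix.det_fin_two_of]; field_simp; ring
  have dg : ∀ t : ℝ, (!![(1 + (b + σ * t) * (σ * t)) / n, σ * t; b + σ * t, n] :
      Matrix (Fin 2) (Fin 2) ℝ).det = 1 := by
    intro t; rw [Matrix.det_fin_two_of]; field_simp; ring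
  refine straight_of_path (P := P) (fun t => ⟨_, df t⟩) (fun t => ⟨_, dg t⟩)
    (continuous_SL2_mk (by fun_prop) (by fun_prop) (by fun_prop) (by fun_prop) df)
    (continuous_SL2_mk (by fun_prop) (by fun_prop) (by fun_prop) (by fun_prop) dg) ?_ ?_ ?_
  · apply Subtype.ext; rw [hA]; simp
  · apply Subtype.ext; rw [hB]; simp
  · intro t ht
    have pf : 0 < 1 + (a + σ * t) * (σ * t) := by
      have : (a + σ * t) * (σ * t) = (σ * a) * t + t ^ 2 * σ ^ 2 := by ring
      rw [this, hσ]; positivity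
    have pg : 0 < 1 + (b + σ * t) * (σ * t) := by
      have : (b + σ * t) * (σ * t) = (σ * b) * t + t ^ 2 * σ ^ 2 := by ring
      rw [this, hσ]; positivity
    refine ⟨!![1, 0; 0, σ], !![m, σ * a + t; t, (1 + (a + σ * t) * (σ * t)) / m],
      !![(1 + (b + σ * t) * (σ * t)) / n, t; σ * b + t, n], ?_, ?_, ?_, ?_, ?_⟩
    · rw [Matrix.det_fin_two_of]; intro h; simp at h; simp [h] at hσ
    · intro i j; fin_cases i <;> fin_cases j <;> simp <;> positivity
    · intro i j; fin_cases i <;> fin_cases j <;> simp <;> positivity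
    · ext i j; fin_cases i <;> fin_cases j <;> simp <;>
        first | ring1 | linear_combination t * hσ | linear_combination (-a) * hσ
    · ext i j; fin_cases i <;> fin_cases j <;> simp <;>
        first | ring1 | linear_combination t * hσ

/-- A common unstable direction: once both eigenvalues are moved off `1`, a thin cone
`|y| ≤ c |x|` around that direction is strictly invariant. -/
theorem straight_of_common_triangular {A B P : SL2} {m n a b : ℝ} (hm : 1 ≤ m) (hn : 1 ≤ n)
    (hA : ((P * A * P⁻¹ : SL2) : Matrix (Fin 2) (Fin 2) ℝ) = !![m, a; 0, m⁻¹])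
    (hB : ((P * B * P⁻¹ : SL2) : Matrix (Fin 2) (Fin 2) ℝ) = !![n, b; 0, n⁻¹]) :
    Straight (A, B) := by
  have pos : ∀ k : ℝ, 1 ≤ k → ∀ t : ℝ, k + t ^ 2 ≠ 0 := fun k hk t => by positivity
  have d : ∀ k : ℝ, 1 ≤ k → ∀ s t : ℝ, (!![k + t ^ 2, s; 0, (k + t ^ 2)⁻¹] :
      Matrix (Fin 2) (Fin 2) ℝ).det = 1 := by
    intro k hk s t
    have := pos k hk t
    rw [Matrix.det_fin_two_of]; field_simp; ring
  have hinv : ∀ k : ℝ, 1 ≤ k → Continuous fun t : ℝ => (k + t ^ 2)⁻¹ := fun k hk =>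
    Continuous.inv₀ (by fun_prop) (pos k hk)
  refine straight_of_path (P := P) (fun t => ⟨_, d m hm a t⟩) (fun t => ⟨_, d n hn b t⟩)
    (continuous_SL2_mk (by fun_prop) (by fun_prop) (by fun_prop) (hinv m hm) (d m hm a))
    (continuous_SL2_mk (by fun_prop) (by fun_prop) (by fun_prop) (hinv n hn) (d n hn b)) ?_ ?_ ?_
  · apply Subtype.ext; rw [hA]; simp
  · apply Subtype.ext; rw [hB]; simp
  · intro t ht
    have gap : ∀ k : ℝ, 1 ≤ k → 0 < (k + t ^ 2) - (k + t ^ 2)⁻¹ := by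
      intro k hk
      have h1 : 1 < k + t ^ 2 := by have : 0 < t ^ 2 := by positivity
                                    linarith
      have := inv_lt_one_of_one_lt₀ h1
      linarith
    have gm := gap m hm
    have gn := gap n hn
    set e := min ((m + t ^ 2) - (m + t ^ 2)⁻¹) ((n + t ^ 2) - (n + t ^ 2)⁻¹) with he
    have e0 : 0 < e := lt_min gm gn
    -- `c` is chosen so that `|a| c` and `|b| c` stay below both spectral gaps
    set c := e / (|a| + |b| + 1) with hc
    have den : 0 < |a| + |b| + 1 := by positivity
    have c0 : 0 < c := by positivity
    have ce : (|a| + |b| + 1) * c = e := by rw [hc]; field_simp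
    have main : ∀ k s : ℝ, 1 ≤ k → e ≤ (k + t ^ 2) - (k + t ^ 2)⁻¹ → |s| ≤ |a| + |b| →
        ∃ X : Matrix (Fin 2) (Fin 2) ℝ, (∀ i j, 0 < X i j) ∧
          (!![c, 1; c, -1] : Matrix (Fin 2) (Fin 2) ℝ) * !![k + t ^ 2, s; 0, (k + t ^ 2)⁻¹] =
            X * !![c, 1; c, -1] := by
      intro k s hk hke hs
      have hlt : |s * c| < (k + t ^ 2) - (k + t ^ 2)⁻¹ := by
        rw [abs_mul, abs_of_pos c0]
        nlinarith
      have hi : 0 < (k + t ^ 2)⁻¹ := by positivity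
      generalize (k + t ^ 2)⁻¹ = l at hlt hi ⊢
      generalize k + t ^ 2 = r at hlt ⊢
      rw [abs_lt] at hlt
      refine ⟨!![(r + s * c + l) / 2, (r - s * c - l) / 2; (r + s * c - l) / 2,
        (r - s * c + l) / 2], ?_, ?_⟩
      · intro i j; fin_cases i <;> fin_cases j <;> simp <;> linarith
      · ext i j; fin_cases i <;> fin_cases j <;> simp <;> ring
    obtain ⟨X, hX, hX'⟩ := main m a hm (min_le_left _ _) (by linarith [abs_nonneg b])
    obtain ⟨Y, hY, hY'⟩ := main n b hn (min_le_right _ _) (by linarith [abs_nonneg a])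
    refine ⟨!![c, 1; c, -1], X, Y, ?_, hX, hY, hX', hY'⟩
    rw [Matrix.det_fin_two_of]
    linarith

/-! ### Existence of the canonical basis -/

/-- An eigenvector for the larger eigenvalue. -/
theorem exists_unstable (M : SL2) (hM : 2 ≤ trace2 M) :
    ∃ (m : ℝ) (u : Fin 2 → ℝ), 1 ≤ m ∧ u ≠ 0 ∧ (M : Matrix (Fin 2) (Fin 2) ℝ) *ᵥ u = m • u := by
  set t := trace2 M with ht
  have hs : √(t ^ 2 - 4) ^ 2 = t ^ 2 - 4 := Real.sq_sqrt (by nlinarith)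
  have hs0 := Real.sqrt_nonneg (t ^ 2 - 4)
  set s := √(t ^ 2 - 4)
  have hdet : ((M : Matrix (Fin 2) (Fin 2) ℝ) - ((t + s) / 2) • 1).det = 0 := by
    have h1 := M.det_coe
    rw [Matrix.det_fin_two] at h1
    have h2 : t = (M : Matrix (Fin 2) (Fin 2) ℝ) 0 0 + (M : Matrix (Fin 2) (Fin 2) ℝ) 1 1 := by
      rw [ht, trace2, Matrix.trace_fin_two]
    rw [Matrix.det_fin_two]
    simp only [Matrix.sub_apply, Matrix.smul_apply, Matrix.one_apply, smul_eq_mul]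
    norm_num
    linear_combination h1 + hs / 4 + ((t + s) / 2) * h2
  obtain ⟨u, hu, h⟩ := Matrix.exists_mulVec_eq_zero_iff.2 hdet
  refine ⟨(t + s) / 2, u, by linarith, hu, ?_⟩
  rw [Matrix.sub_mulVec, Matrix.smul_mulVec, Matrix.one_mulVec] at h
  exact sub_eq_zero.1 h

/-- Change of basis to a unimodular pair of vectors `u, v`: eigenvectors among them produce
triangular matrices. -/
theorem exists_conj (u v : Fin 2 → ℝ) (huv : u 0 * v 1 - u 1 * v 0 = 1) :
    ∃ P : SL2, ∀ (M : SL2) (c : ℝ), c ≠ 0 →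
      ((M : Matrix (Fin 2) (Fin 2) ℝ) *ᵥ u = c • u → ∃ a,
        ((P * M * P⁻¹ : SL2) : Matrix (Fin 2) (Fin 2) ℝ) = !![c, a; 0, c⁻¹]) ∧
      ((M : Matrix (Fin 2) (Fin 2) ℝ) *ᵥ v = c • v → ∃ b,
        ((P * M * P⁻¹ : SL2) : Matrix (Fin 2) (Fin 2) ℝ) = !![c⁻¹, 0; b, c]) := by
  have hdet : (!![v 1, -v 0; -u 1, u 0] : Matrix (Fin 2) (Fin 2) ℝ).det = 1 := by
    rw [Matrix.det_fin_two_of]; linarith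
  refine ⟨⟨_, hdet⟩, fun M c hc => ?_⟩
  set P : SL2 := ⟨_, hdet⟩ with hP
  set Z := P * M * P⁻¹ with hZ
  have hZdet := Z.det_coe
  rw [Matrix.det_fin_two] at hZdet
  have hZm : (Z : Matrix (Fin 2) (Fin 2) ℝ) =
      !![v 1, -v 0; -u 1, u 0] * (M : Matrix (Fin 2) (Fin 2) ℝ) * !![u 0, v 0; u 1, v 1] := by
    rw [hZ, Matrix.SpecialLinearGroup.coe_mul, Matrix.SpecialLinearGroup.coe_mul,
      Matrix.SpecialLinearGroup.coe_inv, hP, Matrix.adjugate_fin_two]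
    simp
  set m := (M : Matrix (Fin 2) (Fin 2) ℝ)
  constructor
  · intro h
    have h0 := congrFun h 0
    have h1 := congrFun h 1
    simp only [Matrix.mulVec, dotProduct, Fin.sum_univ_two, Pi.smul_apply, smul_eq_mul] at h0 h1
    have z00 : (Z : Matrix (Fin 2) (Fin 2) ℝ) 0 0 = c := by
      rw [hZm]; simp [Matrix.mul_apply, Matrix.vecMul, dotProduct, Fin.sum_univ_two]
      linear_combination v 1 * h0 - v 0 * h1 + c * huv
    have z10 : (Z : Matrix (Fin 2) (Fin 2) ℝ) 1 0 = 0 := by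
      rw [hZm]; simp [Matrix.mul_apply, Matrix.vecMul, dotProduct, Fin.sum_univ_two]
      linear_combination -u 1 * h0 + u 0 * h1
    have z11 : (Z : Matrix (Fin 2) (Fin 2) ℝ) 1 1 = c⁻¹ := by
      rw [z00, z10] at hZdet
      field_simp
      linarith
    refine ⟨(Z : Matrix (Fin 2) (Fin 2) ℝ) 0 1, ?_⟩
    rw [Matrix.eta_fin_two (Z : Matrix (Fin 2) (Fin 2) ℝ), z00, z10, z11]
    simp
  · intro h
    have h0 := congrFun h 0
    have h1 := congrFun h 1
    simp only [Matrix.mulVec, dotProduct, Fin.sum_univ_two, Pi.smul_apply, smul_eq_mul] at h0 h1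
    have z11 : (Z : Matrix (Fin 2) (Fin 2) ℝ) 1 1 = c := by
      rw [hZm]; simp [Matrix.mul_apply, Matrix.vecMul, dotProduct, Fin.sum_univ_two]
      linear_combination -u 1 * h0 + u 0 * h1 + c * huv
    have z01 : (Z : Matrix (Fin 2) (Fin 2) ℝ) 0 1 = 0 := by
      rw [hZm]; simp [Matrix.mul_apply, Matrix.vecMul, dotProduct, Fin.sum_univ_two]
      linear_combination v 1 * h0 - v 0 * h1
    have z00 : (Z : Matrix (Fin 2) (Fin 2) ℝ) 0 0 = c⁻¹ := by
      rw [z11, z01] at hZdet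
      field_simp
      linarith
    refine ⟨(Z : Matrix (Fin 2) (Fin 2) ℝ) 1 0, ?_⟩
    rw [Matrix.eta_fin_two (Z : Matrix (Fin 2) (Fin 2) ℝ), z00, z01, z11]
    simp

theorem exists_canonical_of_not_straight {A B : SL2} (hA : 2 ≤ trace2 A) (hB : 2 ≤ trace2 B)
    (h : ¬ Straight (A, B)) :
    ∃ (P : SL2) (μ ν a b : ℝ), 1 ≤ μ ∧ 1 ≤ ν ∧ a * b < 0 ∧
      ((P * A * P⁻¹ : SL2) : Matrix (Fin 2) (Fin 2) ℝ) = !![μ, a; 0, μ⁻¹] ∧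
      ((P * B * P⁻¹ : SL2) : Matrix (Fin 2) (Fin 2) ℝ) = !![ν⁻¹, 0; b, ν] := by
  obtain ⟨μ, u, hμ, hu, hAu⟩ := exists_unstable A hA
  obtain ⟨ν, v, hν, hv, hBv⟩ := exists_unstable B hB
  have hμ0 : μ ≠ 0 := by positivity
  have hν0 : ν ≠ 0 := by positivity
  by_cases hd : u 0 * v 1 - u 1 * v 0 = 0
  · exfalso
    have hBu : (B : Matrix (Fin 2) (Fin 2) ℝ) *ᵥ u = ν • u := by
      have hN := normSq_pos hv
      have e : u = ((u 0 * v 0 + u 1 * v 1) / (v 0 ^ 2 + v 1 ^ 2)) • v := by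
        ext i
        fin_cases i
        · simp; field_simp; linear_combination v 1 * hd
        · simp; field_simp; linear_combination (-v 0) * hd
      rw [e, Matrix.mulVec_smul, hBv, smul_comm]
    have hN := normSq_pos hu
    obtain ⟨P, hP⟩ := exists_conj u
      ![-u 1 / (u 0 ^ 2 + u 1 ^ 2), u 0 / (u 0 ^ 2 + u 1 ^ 2)] (by simp; field_simp; ring)
    obtain ⟨a, ha⟩ := (hP A μ hμ0).1 hAu
    obtain ⟨b, hb⟩ := (hP B ν hν0).1 hBu
    exact h (straight_of_common_triangular hμ hν ha hb)
  · obtain ⟨P, hP⟩ := exists_conj u ((u 0 * v 1 - u 1 * v 0)⁻¹ • v) (by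
      simp only [Pi.smul_apply, smul_eq_mul]
      rw [← inv_mul_cancel₀ hd]; ring)
    obtain ⟨a, ha⟩ := (hP A μ hμ0).1 hAu
    obtain ⟨b, hb⟩ := (hP B ν hν0).2 (by rw [Matrix.mulVec_smul, hBv, smul_comm])
    refine ⟨P, μ, ν, a, b, hμ, hν, ?_, ha, hb⟩
    by_contra hab
    exact h (straight_of_opposite_triangular hμ hν (not_lt.1 hab) ha hb)

end

/-- **Canonical basis for twisted pairs** (Lemma 3.10 of Avila–Bochi–Yoccoz):
a pair `(A,B)` with `tr A ≥ 2`, `tr B ≥ 2` is twisted iff in some basis it has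
the canonical triangular forms with `μ, ν ≥ 1` and `αβ < 0`; moreover
`γ = αβ` depends only on `(A,B)`. -/
theorem twisted_canonical_basis (A B : SL2)
    (hA : 2 ≤ trace2 A) (hB : 2 ≤ trace2 B) :
    (Twisted (A, B) ↔
      ∃ (P : SL2) (μ ν a b : ℝ), 1 ≤ μ ∧ 1 ≤ ν ∧ a * b < 0 ∧
        ((P * A * P⁻¹ : SL2) : Matrix (Fin 2) (Fin 2) ℝ) = !![μ, a; 0, μ⁻¹] ∧
        ((P * B * P⁻¹ : SL2) : Matrix (Fin 2) (Fin 2) ℝ) = !![ν⁻¹, 0; b, ν]) ∧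
    (∀ (P P' : SL2) (μ ν a b μ' ν' a' b' : ℝ),
      1 ≤ μ → 1 ≤ ν → a * b < 0 →
      ((P * A * P⁻¹ : SL2) : Matrix (Fin 2) (Fin 2) ℝ) = !![μ, a; 0, μ⁻¹] →
      ((P * B * P⁻¹ : SL2) : Matrix (Fin 2) (Fin 2) ℝ) = !![ν⁻¹, 0; b, ν] →
      1 ≤ μ' → 1 ≤ ν' → a' * b' < 0 →
      ((P' * A * P'⁻¹ : SL2) : Matrix (Fin 2) (Fin 2) ℝ) = !![μ', a'; 0, μ'⁻¹] →
      ((P' * B * P'⁻¹ : SL2) : Matrix (Fin 2) (Fin 2) ℝ) = !![ν'⁻¹, 0; b', ν'] →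
      a * b = a' * b') := by
  refine ⟨⟨fun h => exists_canonical_of_not_straight hA hB h.2.2, ?_⟩, ?_⟩
  · rintro ⟨P, μ, ν, a, b, hμ, hν, hab, hPA, hPB⟩
    refine ⟨hA.trans (le_abs_self _), hB.trans (le_abs_self _), fun hs => ?_⟩
    have h := gam_nonneg_of_straight hs (by linarith) (by linarith)
    rw [gam_eq_of_canonical hμ hν hPA hPB] at h
    linarith
  · intro P P' μ ν a b μ' ν' a' b' hμ hν _ hPA hPB hμ' hν' _ hPA' hPB'
    rw [← gam_eq_of_canonical hμ hν hPA hPB, gam_eq_of_canonical hμ' hν' hPA' hPB']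
end
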